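/- Suppose a is contained in the Jacobson radical of R and M is an a-relative generalized Cohen-Macaulay R-module with c := cd(a,M) > 0. Then f_a(M) = λ_a(M), and cd(a, R/p) = c for every prime p ∈ Ass_R M \ V(a). -/

import Mathlib

/-!
Formalization of a statement from "A theory of relative generalized Cohen-Macaulay modules"
by Divaani-Aazar, Ghanbari Doust, Tousi and Zakeri.

Throughout, `R` is a commutative Noetherian ring and `M` a finitely generated `R`-module.
Conventions used below:
* `locH I i M` is the local cohomology module `H^i_I(M)` (Mathlib's `localCohomology`).
* Conditions `cd(I,M) = c`, `ara(I,M) = n`, `f_I(M) = f`, `grade(I,M) = r` are expressed by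
  the predicates `IsCd`, `IsAra`, `IsFinDim`, `IsGrade`.
* Sequences are given as functions `Fin r → R`; `pSpan M x i = ⟨x_0,…,x_{i-1}⟩M`.
* Koszul (co)homology is defined via the explicit (co)chain complex on the `p`-element
  subsets of `{0,…,n-1}`, and the canonical map `λ^i` into local cohomology is the structure
  map (at exponent 1) into the direct limit of Koszul cohomologies of powers of the sequence,
  which is the realization of `H^i_{⟨x⟩}(M)` used in the paper (2.1(iv)).
-/

open CategoryTheory

noncomputable section

variable {R : Type} [CommRing R]

/-! ### Local cohomology, cohomological dimension, arithmetic rank -/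

/-- The `i`-th local cohomology module `H^i_I(M)`. -/
abbrev locH (I : Ideal R) (i : ℕ) (M : Type) [AddCommGroup M] [Module R M] : ModuleCat R :=
  (localCohomology I i).obj (ModuleCat.of R M)

/-- `cd(I, M) = c`: the cohomological dimension of `I` on `M` equals `c`, i.e.
`H^c_I(M) ≠ 0` and `H^i_I(M) = 0` for all `i > c`. -/
def IsCd (I : Ideal R) (M : Type) [AddCommGroup M] [Module R M] (c : ℕ) : Prop :=
  Nontrivial (locH I c M) ∧ ∀ i : ℕ, c < i → Subsingleton (locH I i M)

/-- `f_I(M) = f`: the `I`-finiteness dimension of `M` equals `f`, i.e. `f` is the least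
integer such that `H^f_I(M)` is not finitely generated. -/
def IsFinDim (I : Ideal R) (M : Type) [AddCommGroup M] [Module R M] (f : ℕ) : Prop :=
  (∀ i : ℕ, i < f → Module.Finite R (locH I i M)) ∧ ¬ Module.Finite R (locH I f M)

/-- `M` is `I`-relative generalized Cohen-Macaulay: `cd(I,M) ≤ 0` or `cd(I,M) = f_I(M)`. -/
def IsRelGCM (I : Ideal R) (M : Type) [AddCommGroup M] [Module R M] : Prop :=
  (∀ i : ℕ, 0 < i → Subsingleton (locH I i M)) ∨
    ∃ c : ℕ, IsCd I M c ∧ IsFinDim I M c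

/-- `ara(I, M) = n`: the arithmetic rank of `I` with respect to `M` equals `n`, i.e. `n` is the
least integer such that there are `x_1, …, x_n ∈ R` with
`Rad(⟨x_1,…,x_n⟩ + Ann M) = Rad(I + Ann M)`. -/
def IsAra (I : Ideal R) (M : Type) [AddCommGroup M] [Module R M] (n : ℕ) : Prop :=
  IsLeast {k : ℕ | ∃ x : Fin k → R,
    (Ideal.span (Set.range x) + Module.annihilator R M).radical
      = (I + Module.annihilator R M).radical} n

/-- `x_1, …, x_c` is an `I`-relative system of parameters of `M` (where `c = cd(I,M)`):
the `x_i` lie in `I` and `Rad(⟨x_1,…,x_c⟩ + Ann M) = Rad(I + Ann M)`. -/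
def IsRsop (I : Ideal R) (M : Type) [AddCommGroup M] [Module R M] {c : ℕ}
    (x : Fin c → R) : Prop :=
  (∀ j, x j ∈ I) ∧
    (Ideal.span (Set.range x) + Module.annihilator R M).radical
      = (I + Module.annihilator R M).radical

/-! ### The natural maps `φ^i_M : Ext^i(R/I, M) → H^i_I(M)` and relative surjective
Buchsbaum modules -/

/-- The `i`-th Ext module `Ext^i_R(R/I, M)`. -/
abbrev extH (I : Ideal R) (i : ℕ) (M : Type) [AddCommGroup M] [Module R M] : ModuleCat R :=
  ((Ext R (ModuleCat R) i).obj (Opposite.op (ModuleCat.of R (R ⧸ I)))).obj (ModuleCat.of R M)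

/-- The natural map `φ^i_M : Ext^i_R(R/I, M) → H^i_I(M)`, i.e. the structure map into the
colimit `H^i_I(M) = colim_n Ext^i_R(R/I^n, M)` at `n = 1`. -/
def phi (I : Ideal R) (i : ℕ) (M : Type) [AddCommGroup M] [Module R M] :
    ((localCohomology.diagram (localCohomology.idealPowersDiagram I) i).obj
        (Opposite.op (Opposite.op (1 : ℕ)))).obj (ModuleCat.of R M) ⟶
      (localCohomology I i).obj (ModuleCat.of R M) :=
  have := localCohomology.hasColimitDiagram.{0, 0} (localCohomology.idealPowersDiagram I) i
  (Limits.colimit.ι (localCohomology.diagram (localCohomology.idealPowersDiagram I) i)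
      (Opposite.op (Opposite.op (1 : ℕ)))).app (ModuleCat.of R M)

/-- `φ^i_M` is surjective. -/
def PhiSurj (I : Ideal R) (i : ℕ) (M : Type) [AddCommGroup M] [Module R M] : Prop :=
  Function.Surjective (phi I i M)

/-- `M` is `I`-relative surjective Buchsbaum: `φ^i_M` is surjective for all `i < cd(I,M)`. -/
def IsRelSurjBuchsbaum (I : Ideal R) (M : Type) [AddCommGroup M] [Module R M] : Prop :=
  ∀ i : ℕ, (∃ j : ℕ, i < j ∧ Nontrivial (locH I j M)) → PhiSurj I i M

/-- `grade(I, M) = r`: `r` is the least integer with `Ext^r_R(R/I, M) ≠ 0`. -/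
def IsGrade (I : Ideal R) (M : Type) [AddCommGroup M] [Module R M] (r : ℕ) : Prop :=
  Nontrivial (extH I r M) ∧ ∀ i : ℕ, i < r → Subsingleton (extH I i M)

/-! ### Height, depth, `λ_I(M)`, the finiteness dimension as an extended natural number,
and Cohen-Macaulay modules over local rings -/

/-- The height of an ideal `I`: the infimum of the heights of the primes containing `I`. -/
noncomputable def idealHeight {S : Type} [CommRing S] (I : Ideal S) : ℕ∞ :=
  sInf {h : ℕ∞ | ∃ q : PrimeSpectrum S, I ≤ q.asIdeal ∧ h = Order.height q}

/-- The depth of a module `N` over a local ring `A`, characterized à la Rees as the least `k`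
with `Ext^k_A(A/m, N) ≠ 0`. -/
noncomputable def depthE (A : Type) [CommRing A] [IsLocalRing A] (N : Type) [AddCommGroup N]
    [Module A N] : ℕ∞ :=
  sInf {d : ℕ∞ | ∃ k : ℕ, d = (k : ℕ∞) ∧
    Nontrivial (extH (IsLocalRing.maximalIdeal A) k N)}

/-- The (Krull) dimension of a module `N` over a ring `A`, as the Krull dimension of
`A / Ann_A N`. -/
noncomputable def dimE (A : Type) [CommRing A] (N : Type) [AddCommGroup N] [Module A N] :
    WithBot ℕ∞ :=
  ringKrullDim (A ⧸ Module.annihilator A N)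

/-- A module `N` over a local ring `A` is Cohen-Macaulay if `depth N = dim N`. -/
def IsCMMod (A : Type) [CommRing A] [IsLocalRing A] (N : Type) [AddCommGroup N]
    [Module A N] : Prop :=
  (depthE A N : WithBot ℕ∞) = dimE A N

/-- The `I`-finiteness dimension `f_I(M)`, as an extended natural number. -/
noncomputable def finDimNE (I : Ideal R) (M : Type) [AddCommGroup M] [Module R M] : ℕ∞ :=
  sInf {d : ℕ∞ | ∃ k : ℕ, d = (k : ℕ∞) ∧ ¬ Module.Finite R (locH I k M)}

/-- `λ_I(M) := inf { depth M_p + ht((I+p)/p) | p ∈ Spec R \ V(I) }`. -/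
noncomputable def lambdaNE (I : Ideal R) (M : Type) [AddCommGroup M] [Module R M] : ℕ∞ :=
  sInf {d : ℕ∞ | ∃ p : PrimeSpectrum R, ¬ I ≤ p.asIdeal ∧
    d = depthE (Localization.AtPrime p.asIdeal) (LocalizedModule p.asIdeal.primeCompl M)
        + idealHeight (Ideal.map (Ideal.Quotient.mk p.asIdeal) I)}

namespace LC

open Limits Abelian

/-! ### Bridge between the two versions of `Ext` -/

section Bridge

variable {X : ModuleCat.{0} R} (P : ProjectiveResolution X) (Y : ModuleCat.{0} R) (n : ℕ)

/-- cocycles -/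
def Zc : Submodule R (P.complex.X n ⟶ Y) where
  carrier := {z | P.complex.d (n+1) n ≫ z = 0}
  add_mem' {a b} ha hb := by
    simp only [Set.mem_ofPred_eq] at *
    rw [Preadditive.comp_add, ha, hb, add_zero]
  zero_mem' := by simp
  smul_mem' r a ha := by
    simp only [Set.mem_ofPred_eq] at *
    rw [Linear.comp_smul, ha, smul_zero]

lemma Zc_prop {P : ProjectiveResolution X} {Y : ModuleCat.{0} R} {n : ℕ} (z : Zc P Y n) :
    P.complex.d (n+1) n ≫ z.1 = 0 := z.2

/-- the class in the new Ext -/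
def uLin : Zc P Y n →ₗ[R] Abelian.Ext X Y n where
  toFun z := P.extMk z.1 (n+1) rfl (Zc_prop z)
  map_add' a b := (P.add_extMk _ _ _ _ (Zc_prop a) (Zc_prop b)).symm
  map_smul' r a := by
    rw [RingHom.id_apply, Abelian.Ext.smul_eq_comp_mk₀, P.extMk_comp_mk₀]
    congr 1

lemma uLin_surj : Function.Surjective (uLin P Y n) := by
  intro a
  obtain ⟨f, hf, h⟩ := P.extMk_surjective a (n+1) rfl
  exact ⟨⟨f, hf⟩, h⟩

lemma uLin_zero_iff (z : Zc P Y n) :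
    uLin P Y n z = 0 ↔ ∃ w : P.complex.X ((ComplexShape.down ℕ).next n) ⟶ Y,
      P.complex.d n ((ComplexShape.down ℕ).next n) ≫ w = z.1 := by
  rcases n with _ | n
  · constructor
    · intro h
      refine ⟨0, ?_⟩
      replace h : P.extMk z.1 1 rfl (Zc_prop z) = 0 := h
      have h' := congrArg P.extEquivCohomologyClass h
      simp only [ProjectiveResolution.extEquivCohomologyClass_extMk,
        ProjectiveResolution.extEquivCohomologyClass_zero,
        CochainComplex.HomComplex.CohomologyClass.mk_eq_zero_iff] at h'
      rw [CochainComplex.HomComplex.Cocycle.toSingleMk_mem_coboundaries_iff _ _ _ _ _ 1 (by simp)] at h'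
      obtain ⟨g, hg⟩ := h'
      have hz : IsZero (P.cochainComplex.X 1) :=
        P.cochainComplex.isZero_of_isStrictlyLE 0 1 (by simp)
      have hd : P.cochainComplex.d (-((0:ℕ):ℤ)) 1 = 0 := hz.eq_of_tgt _ _
      rw [hd, zero_comp] at hg
      rw [comp_zero]
      rw [← cancel_epi (P.cochainComplexXIso (-((0:ℕ):ℤ)) 0 rfl).hom, ← hg, comp_zero]
    · rintro ⟨w, hw⟩
      have : P.complex.d 0 ((ComplexShape.down ℕ).next 0) = 0 :=
        P.complex.shape _ _ (by simp)
      rw [this, zero_comp] at hw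
      have : z = 0 := Subtype.ext hw.symm
      rw [this, map_zero]
  · have hn : (ComplexShape.down ℕ).next (n+1) = n := by simp
    rw [hn]
    exact P.extMk_eq_zero_iff z.1 _ rfl z.2 n rfl

/-- the old Ext. -/
abbrev oExt (X Y : ModuleCat.{0} R) (n : ℕ) : ModuleCat.{0} R :=
  ((_root_.Ext R (ModuleCat.{0} R) n).obj (Opposite.op X)).obj Y

/-- the functor -/
abbrev Fy : ModuleCat.{0} R ⥤ (ModuleCat.{0} R)ᵒᵖ := ((linearYoneda R (ModuleCat.{0} R)).obj Y).rightOp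

/-- the complex -/
abbrev Ly : ChainComplex (ModuleCat.{0} R)ᵒᵖ ℕ := ((Fy Y).mapHomologicalComplex _).obj P.complex

/-- opcycles -/
abbrev Op' : ModuleCat.{0} R := ((Ly P Y).opcycles n).unop

/-- map to morphisms -/
def opTo : Op' P Y n →ₗ[R] (P.complex.X n ⟶ Y) := ((Ly P Y).pOpcycles n).unop.hom

lemma opTo_inj : Function.Injective (opTo P Y n) := by
  have : Mono ((Ly P Y).pOpcycles n).unop := inferInstance
  exact (ModuleCat.mono_iff_injective _).1 this

lemma opTo_range (z : P.complex.X n ⟶ Y) (hz : z ∈ Zc P Y n) : ∃ o, opTo P Y n o = z := by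
  have hex : (ShortComplex.mk ((Ly P Y).d (n+1) n) ((Ly P Y).pOpcycles n) ((Ly P Y).d_pOpcycles _ _)).Exact :=
    ShortComplex.exact_of_g_is_cokernel _ ((Ly P Y).opcyclesIsCokernel (n+1) n (by simp))
  have := (ShortComplex.moduleCat_exact_iff _).1 hex.unop z hz
  exact this

lemma opTo_mem (o : Op' P Y n) : opTo P Y n o ∈ Zc P Y n := by
  have h : ((Ly P Y).pOpcycles n).unop ≫ ((Ly P Y).d (n+1) n).unop = 0 := by
    rw [← unop_comp, (Ly P Y).d_pOpcycles]; rfl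
  have := congrArg (fun f => f.hom o) h
  exact this

/-- equivalence -/
def opEquiv : Op' P Y n ≃ₗ[R] Zc P Y n :=
  LinearEquiv.ofBijective ((opTo P Y n).codRestrict _ (opTo_mem P Y n))
    ⟨fun a b h => opTo_inj P Y n (congrArg Subtype.val h),
     fun z => by
      obtain ⟨o, ho⟩ := opTo_range P Y n z.1 z.2
      exact ⟨o, Subtype.ext ho⟩⟩

lemma opEquiv_val (o) : (opEquiv P Y n o).1 = opTo P Y n o := rfl

/-- typed iso -/
def isoL : ((Fy Y).leftDerived n).obj X ≅ (Ly P Y).homology n := P.isoLeftDerivedObj (Fy Y) n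

/-- the map -/
def vOp : Op' P Y n →ₗ[R] oExt X Y n :=
  ((isoL P Y n).hom ≫ (Ly P Y).homologyι n).unop.hom

lemma vOp_surj : Function.Surjective (vOp P Y n) := by
  have : Epi ((isoL P Y n).hom ≫ (Ly P Y).homologyι n).unop := inferInstance
  exact (ModuleCat.epi_iff_surjective _).1 this

lemma vOp_zero_iff (o : Op' P Y n) : vOp P Y n o = 0 ↔
    ∃ w : P.complex.X ((ComplexShape.down ℕ).next n) ⟶ Y,
      P.complex.d n ((ComplexShape.down ℕ).next n) ≫ w = opTo P Y n o := by
  set j := (ComplexShape.down ℕ).next n with hj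
  have hex : (ShortComplex.mk ((Ly P Y).homologyι n) ((Ly P Y).fromOpcycles n j) (by simp)).Exact :=
    ShortComplex.exact_of_f_is_kernel _ ((Ly P Y).homologyIsKernel n j rfl)
  have h1 : ∀ o : Op' P Y n, vOp P Y n o = 0 ↔ ((Ly P Y).homologyι n).unop.hom o = 0 := by
    intro o
    have hinj : Mono (isoL P Y n).hom.unop := inferInstance
    have hinj' := (ModuleCat.mono_iff_injective _).1 hinj
    constructor
    · intro h
      apply hinj'
      rw [map_zero]; exact h
    · intro h
      change (isoL P Y n).hom.unop.hom (((Ly P Y).homologyι n).unop.hom o) = 0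
      rw [h, map_zero]
  have hd : ∀ w : P.complex.X j ⟶ Y, opTo P Y n (((Ly P Y).fromOpcycles n j).unop.hom w) =
      P.complex.d n j ≫ w := by
    intro w
    have h : ((Ly P Y).fromOpcycles n j).unop ≫ ((Ly P Y).pOpcycles n).unop = ((Ly P Y).d n j).unop := by
      rw [← unop_comp, (Ly P Y).p_fromOpcycles]
    exact congrArg (fun f => f.hom w) h
  rw [h1]
  constructor
  · intro h
    obtain ⟨w, hw⟩ := (ShortComplex.moduleCat_exact_iff _).1 hex.unop o h
    exact ⟨w, (hd w).symm.trans (congrArg (opTo P Y n) hw)⟩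
  · rintro ⟨w, hw⟩
    rw [← hd] at hw
    have hw' := opTo_inj P Y n hw
    rw [← hw']
    have h : ((Ly P Y).fromOpcycles n j).unop ≫ ((Ly P Y).homologyι n).unop = 0 := by
      rw [← unop_comp, (Ly P Y).homologyι_comp_fromOpcycles]; rfl
    exact congrArg (fun f => f.hom w) h

/-- the class in old Ext -/
def vLin : Zc P Y n →ₗ[R] oExt X Y n := vOp P Y n ∘ₗ (opEquiv P Y n).symm.toLinearMap

lemma vLin_surj : Function.Surjective (vLin P Y n) :=
  (vOp_surj P Y n).comp (opEquiv P Y n).symm.surjective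

lemma vLin_zero_iff (z : Zc P Y n) : vLin P Y n z = 0 ↔
    ∃ w : P.complex.X ((ComplexShape.down ℕ).next n) ⟶ Y,
      P.complex.d n ((ComplexShape.down ℕ).next n) ≫ w = z.1 := by
  obtain ⟨o, rfl⟩ := (opEquiv P Y n).surjective z
  rw [opEquiv_val, ← vOp_zero_iff]
  simp [vLin]

end Bridge

section Nat

variable {X X' : ModuleCat.{0} R} (P : ProjectiveResolution X) (P' : ProjectiveResolution X')
  (g : X' ⟶ X) (φ : P'.complex ⟶ P.complex) (comm : φ.f 0 ≫ P.π.f 0 = P'.π.f 0 ≫ g)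
  (Y : ModuleCat.{0} R) (n : ℕ)

lemma uLin_natX (comm : φ.f 0 ≫ P.π.f 0 = P'.π.f 0 ≫ g) (z : Zc P Y n)
    (hz : φ.f n ≫ z.1 ∈ Zc P' Y n) :
    uLin P' Y n ⟨φ.f n ≫ z.1, hz⟩ = (Abelian.Ext.mk₀ g).comp (uLin P Y n z) (zero_add n) := by
  have := P.mk₀_comp_extMk (R' := P') z.1 (n+1) rfl z.2 ⟨φ, comm⟩
  exact this.symm

lemma natX_mem (z : Zc P Y n) : φ.f n ≫ z.1 ∈ Zc P' Y n := by
  change P'.complex.d (n+1) n ≫ φ.f n ≫ z.1 = 0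
  rw [← φ.comm_assoc]
  rw [show P.complex.d (n+1) n ≫ z.1 = 0 from z.2, comp_zero]

lemma vLin_natX (z : Zc P Y n) (hz : φ.f n ≫ z.1 ∈ Zc P' Y n) (comm : φ.f 0 ≫ P.π.f 0 = P'.π.f 0 ≫ g) :
    vLin P' Y n ⟨φ.f n ≫ z.1, hz⟩ =
      (((_root_.Ext R (ModuleCat.{0} R) n).map g.op).app Y).hom (vLin P Y n z) := by
  obtain ⟨o, rfl⟩ := (opEquiv P Y n).surjective z
  let ψ : Ly P' Y ⟶ Ly P Y := ((Fy Y).mapHomologicalComplex _).map φ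
  have e1 : (⟨φ.f n ≫ (opEquiv P Y n o).1, hz⟩ : Zc P' Y n) =
      opEquiv P' Y n ((HomologicalComplex.opcyclesMap ψ n).unop.hom o) := by
    apply Subtype.ext
    change φ.f n ≫ opTo P Y n o = _
    have h := congrArg (fun f => f.unop.hom o) (HomologicalComplex.p_opcyclesMap ψ n)
    exact h.symm
  rw [e1]
  simp only [vLin, LinearMap.comp_apply, LinearEquiv.coe_coe, LinearEquiv.symm_apply_apply]
  have h : ((Fy Y).leftDerived n).map g ≫ (isoL P Y n).hom = (isoL P' Y n).hom ≫
    HomologicalComplex.homologyMap ψ n :=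
    ProjectiveResolution.isoLeftDerivedObj_hom_naturality g P' P φ comm (Fy Y) n
  have h2 : ((Fy Y).leftDerived n).map g ≫ (isoL P Y n).hom ≫ (Ly P Y).homologyι n
    = ((isoL P' Y n).hom ≫ (Ly P' Y).homologyι n) ≫ HomologicalComplex.opcyclesMap ψ n := by
    rw [reassoc_of% h, Category.assoc]
    rw [HomologicalComplex.homologyι_naturality ψ n]
  exact (congrArg (fun f => f.unop.hom o) h2).symm

variable {Y} {Y' : ModuleCat.{0} R} (f : Y ⟶ Y')

lemma natY_mem (z : Zc P Y n) : z.1 ≫ f ∈ Zc P Y' n := by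
  change _ ≫ _ ≫ _ = 0
  rw [← Category.assoc, show P.complex.d (n+1) n ≫ z.1 = 0 from z.2, zero_comp]

lemma uLin_natY (z : Zc P Y n) (hz : z.1 ≫ f ∈ Zc P Y' n) :
    uLin P Y' n ⟨z.1 ≫ f, hz⟩ = (uLin P Y n z).comp (Abelian.Ext.mk₀ f) (add_zero n) :=
  (P.extMk_comp_mk₀ z.1 (n+1) rfl z.2 f).symm

lemma vLin_natY (z : Zc P Y n) (hz : z.1 ≫ f ∈ Zc P Y' n) :
    vLin P Y' n ⟨z.1 ≫ f, hz⟩ =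
      (((_root_.Ext R (ModuleCat.{0} R) n).obj (Opposite.op X)).map f).hom (vLin P Y n z) := by
  obtain ⟨o, rfl⟩ := (opEquiv P Y n).surjective z
  let α : Fy Y' ⟶ Fy Y := NatTrans.rightOp ((linearYoneda R (ModuleCat.{0} R)).map f)
  let ψ : Ly P Y' ⟶ Ly P Y := (NatTrans.mapHomologicalComplex α _).app P.complex
  have e1 : (⟨(opEquiv P Y n o).1 ≫ f, hz⟩ : Zc P Y' n) =
      opEquiv P Y' n ((HomologicalComplex.opcyclesMap ψ n).unop.hom o) := by
    apply Subtype.ext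
    change opTo P Y n o ≫ f = _
    have h := congrArg (fun f => f.unop.hom o) (HomologicalComplex.p_opcyclesMap ψ n)
    exact h.symm
  rw [e1]
  simp only [vLin, LinearMap.comp_apply, LinearEquiv.coe_coe, LinearEquiv.symm_apply_apply]
  have h : (NatTrans.leftDerived α n).app X = (isoL P Y' n).hom ≫
    HomologicalComplex.homologyMap ψ n ≫ (isoL P Y n).inv :=
    ProjectiveResolution.leftDerived_app_eq α P n
  have h2 : (NatTrans.leftDerived α n).app X ≫ (isoL P Y n).hom ≫ (Ly P Y).homologyι n
    = ((isoL P Y' n).hom ≫ (Ly P Y').homologyι n) ≫ HomologicalComplex.opcyclesMap ψ n := by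
    rw [h, Category.assoc, Category.assoc, Category.assoc]
    rw [Iso.inv_hom_id_assoc, HomologicalComplex.homologyι_naturality ψ n]
  exact (congrArg (fun f => f.unop.hom o) h2).symm

end Nat

/-- comparison -/
lemma exists_equiv_of_ker {A B C : Type} [AddCommGroup A] [AddCommGroup B] [AddCommGroup C]
    [Module R A] [Module R B] [Module R C] (u : A →ₗ[R] B) (v : A →ₗ[R] C)
    (hu : Function.Surjective u) (hv : Function.Surjective v)
    (h : ∀ a, u a = 0 ↔ v a = 0) : ∃ e : B ≃ₗ[R] C, ∀ a, e (u a) = v a := by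
  have hk : LinearMap.ker u = LinearMap.ker v := by ext a; exact h a
  refine ⟨(u.quotKerEquivOfSurjective hu).symm ≪≫ₗ Submodule.quotEquivOfEq _ _ hk ≪≫ₗ
    v.quotKerEquivOfSurjective hv, fun a => ?_⟩
  have : (u.quotKerEquivOfSurjective hu).symm (u a) = Submodule.Quotient.mk a := by
    rw [LinearEquiv.symm_apply_eq]; rfl
  simp only [LinearEquiv.trans_apply, this]
  rfl

lemma exists_extEquiv (X Y : ModuleCat.{0} R) (n : ℕ) :
    ∃ e : Abelian.Ext X Y n ≃ₗ[R] oExt X Y n,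
      ∀ a, e (uLin (projectiveResolution X) Y n a) = vLin (projectiveResolution X) Y n a :=
  exists_equiv_of_ker _ _ (uLin_surj _ _ _) (vLin_surj _ _ _)
    (fun a => (uLin_zero_iff _ _ _ a).trans (vLin_zero_iff _ _ _ a).symm)

/-- the comparison isomorphism -/
def extEquiv (X Y : ModuleCat.{0} R) (n : ℕ) : Abelian.Ext X Y n ≃ₗ[R] oExt X Y n :=
  (exists_extEquiv X Y n).choose

lemma extEquiv_u (X Y : ModuleCat.{0} R) (n : ℕ) (a) :
    extEquiv X Y n (uLin (projectiveResolution X) Y n a) = vLin (projectiveResolution X) Y n a :=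
  (exists_extEquiv X Y n).choose_spec a

lemma extEquiv_natX {X X' : ModuleCat.{0} R} (g : X' ⟶ X) (Y : ModuleCat.{0} R) (n : ℕ)
    (e : Abelian.Ext X Y n) :
    extEquiv X' Y n ((Abelian.Ext.mk₀ g).comp e (zero_add n)) =
      (((_root_.Ext R (ModuleCat.{0} R) n).map g.op).app Y).hom (extEquiv X Y n e) := by
  obtain ⟨z, rfl⟩ := uLin_surj (projectiveResolution X) Y n e
  let P := projectiveResolution X
  let P' := projectiveResolution X'
  let φ : P'.complex ⟶ P.complex := ProjectiveResolution.lift g P' P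
  have comm : φ.f 0 ≫ P.π.f 0 = P'.π.f 0 ≫ g :=
    ProjectiveResolution.lift_commutes_zero g P' P
  rw [← uLin_natX P P' g φ Y n comm z (natX_mem P P' φ Y n z), extEquiv_u, extEquiv_u]
  exact vLin_natX P P' g φ Y n z _ comm

lemma extEquiv_natY (X : ModuleCat.{0} R) {Y Y' : ModuleCat.{0} R} (f : Y ⟶ Y') (n : ℕ)
    (e : Abelian.Ext X Y n) :
    extEquiv X Y' n (e.comp (Abelian.Ext.mk₀ f) (add_zero n)) =
      (((_root_.Ext R (ModuleCat.{0} R) n).obj (Opposite.op X)).map f).hom (extEquiv X Y n e) := by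
  obtain ⟨z, rfl⟩ := uLin_surj (projectiveResolution X) Y n e
  rw [← uLin_natY _ n f z (natY_mem _ n f z), extEquiv_u, extEquiv_u]
  exact vLin_natY _ n f z _

end LC

namespace LC

open Limits Abelian

section Iota

variable (I : Ideal R)

/-- `R/I^n` -/
abbrev Qn (n : ℕ) : ModuleCat.{0} R := ModuleCat.of R (R ⧸ I ^ n)

/-- restriction -/
def restr {n m : ℕ} (h : n ≤ m) : Qn I m ⟶ Qn I n :=
  ModuleCat.ofHom (Submodule.mapQ _ _ LinearMap.id (Ideal.pow_le_pow_right h))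

/-- local cohomology -/
abbrev HH (i : ℕ) (Y : ModuleCat.{0} R) : ModuleCat.{0} R := (localCohomology I i).obj Y

/-- diagram -/
abbrev Dg (i : ℕ) := localCohomology.diagram (localCohomology.idealPowersDiagram I) i

instance (i : ℕ) : HasColimit (Dg I i) := localCohomology.hasColimitDiagram.{0,0} _ i

/-- index -/
abbrev ix (n : ℕ) : ℕᵒᵖᵒᵖ := Opposite.op (Opposite.op n)

/-- index map -/
abbrev ixm {n m : ℕ} (h : n ≤ m) : ix n ⟶ ix m := (homOfLE h).op.op

/-- evaluated cocone -/
def coc (i : ℕ) (Y : ModuleCat.{0} R) : Cocone (Dg I i ⋙ (evaluation _ _).obj Y) :=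
  ((evaluation _ _).obj Y).mapCocone (colimit.cocone (Dg I i))

def cocIs (i : ℕ) (Y : ModuleCat.{0} R) : IsColimit (coc I i Y) :=
  isColimitOfPreserves ((evaluation _ _).obj Y) (colimit.isColimit (Dg I i))

/-- inclusion -/
def io (n i : ℕ) (Y : ModuleCat.{0} R) : oExt (Qn I n) Y i ⟶ HH I i Y :=
  (colimit.ι (Dg I i) (ix n)).app Y

/-- inclusion -/
def iota (n i : ℕ) (Y : ModuleCat.{0} R) : Abelian.Ext (Qn I n) Y i →ₗ[R] HH I i Y :=
  (io I n i Y).hom ∘ₗ (extEquiv (Qn I n) Y i).toLinearMap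

lemma iota_restr {n m : ℕ} (h : n ≤ m) (i : ℕ) (Y : ModuleCat.{0} R) (e : Abelian.Ext (Qn I n) Y i) :
    iota I m i Y ((Abelian.Ext.mk₀ (restr I h)).comp e (zero_add i)) = iota I n i Y e := by
  simp only [iota, LinearMap.comp_apply, LinearEquiv.coe_coe]
  rw [extEquiv_natX]
  have := colimit.w (Dg I i) (ixm h)
  have h2 := congrArg (fun f => (f.app Y).hom (extEquiv _ _ _ e)) this
  exact h2

lemma iota_nat (n i : ℕ) {Y Y' : ModuleCat.{0} R} (f : Y ⟶ Y') (e : Abelian.Ext (Qn I n) Y i) :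
    iota I n i Y' (e.comp (Abelian.Ext.mk₀ f) (add_zero i)) =
      ((localCohomology I i).map f).hom (iota I n i Y e) := by
  simp only [iota, LinearMap.comp_apply, LinearEquiv.coe_coe]
  rw [extEquiv_natY]
  have := (colimit.ι (Dg I i) (ix n)).naturality f
  exact congrArg (fun f => f.hom (extEquiv _ _ _ e)) this

lemma iota_surj {i : ℕ} {Y : ModuleCat.{0} R} (x : HH I i Y) : ∃ n e, iota I n i Y e = x := by
  obtain ⟨j, y, hy⟩ := Concrete.isColimit_exists_rep _ (cocIs I i Y) x
  refine ⟨j.unop.unop, (extEquiv (Qn I j.unop.unop) Y i).symm y, ?_⟩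
  exact (congrArg (io I j.unop.unop i Y).hom
    ((extEquiv (Qn I j.unop.unop) Y i).apply_symm_apply y)).trans hy

lemma iota_zero {n i : ℕ} {Y : ModuleCat.{0} R} (e : Abelian.Ext (Qn I n) Y i)
    (he : iota I n i Y e = 0) :
    ∃ (m : ℕ) (h : n ≤ m), (Abelian.Ext.mk₀ (restr I h)).comp e (zero_add i) = 0 := by
  have h0 : (coc I i Y).ι.app (ix n) (extEquiv (Qn I n) Y i e) = (coc I i Y).ι.app (ix n)
      (0 : oExt (Qn I n) Y i) := by
    refine Eq.trans he ?_
    exact (map_zero (io I n i Y).hom).symm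
  obtain ⟨k, f, g, hfg⟩ := Concrete.isColimit_exists_of_rep_eq (Dg I i ⋙ (evaluation _ _).obj Y) (cocIs I i Y) _ _ h0
  have hk : n ≤ k.unop.unop := leOfHom f.unop.unop
  refine ⟨k.unop.unop, hk, ?_⟩
  apply (extEquiv _ _ _).injective
  rw [extEquiv_natX, map_zero]
  refine Eq.trans hfg ?_
  exact map_zero ((Dg I i ⋙ (evaluation _ _).obj Y).map g).hom

end Iota

end LC

namespace LC

open Limits Abelian

section LES

variable (I : Ideal R)

lemma exists_desc (i : ℕ) (Y V : ModuleCat.{0} R) (φ : ∀ n, Abelian.Ext (Qn I n) Y i →ₗ[R] V)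
    (hφ : ∀ n m (h : n ≤ m) e, φ m ((Abelian.Ext.mk₀ (restr I h)).comp e (zero_add i)) = φ n e) :
    ∃ d : HH I i Y →ₗ[R] V, ∀ n e, d (iota I n i Y e) = φ n e := by
  let c : Cocone (Dg I i ⋙ (evaluation _ _).obj Y) :=
    { pt := V
      ι := { app := fun j => (ModuleCat.ofHom (φ j.unop.unop ∘ₗ
                (extEquiv (Qn I j.unop.unop) Y i).symm.toLinearMap) : oExt (Qn I j.unop.unop) Y i ⟶ V)
             naturality := fun j k f => by
              have h : j.unop.unop ≤ k.unop.unop := leOfHom f.unop.unop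
              refine ModuleCat.hom_ext (LinearMap.ext fun x => ?_)
              obtain ⟨e, rfl⟩ := (extEquiv (Qn I j.unop.unop) Y i).surjective x
              change φ k.unop.unop ((extEquiv (Qn I k.unop.unop) Y i).symm
                ((((_root_.Ext R (ModuleCat.{0} R) i).map (restr I h).op).app Y).hom
                  (extEquiv (Qn I j.unop.unop) Y i e))) =
                  φ j.unop.unop ((extEquiv (Qn I j.unop.unop) Y i).symm
                    (extEquiv (Qn I j.unop.unop) Y i e))
              rw [← extEquiv_natX, LinearEquiv.symm_apply_apply, LinearEquiv.symm_apply_apply, hφ] } }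
  refine ⟨((cocIs I i Y).desc c).hom, fun n e => ?_⟩
  have := (cocIs I i Y).fac c (ix n)
  have h2 := congrArg (fun f => f.hom (extEquiv (Qn I n) Y i e)) this
  refine Eq.trans h2 ?_
  change φ n ((extEquiv (Qn I n) Y i).symm (extEquiv (Qn I n) Y i e)) = _
  rw [LinearEquiv.symm_apply_apply]

variable {A B C : Type} [AddCommGroup A] [AddCommGroup B] [AddCommGroup C]
  [Module R A] [Module R B] [Module R C]

/-- induced map on local cohomology -/
def Hm (i : ℕ) (f : A →ₗ[R] B) : locH I i A →ₗ[R] locH I i B :=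
  ((localCohomology I i).map (ModuleCat.ofHom f)).hom

lemma Hm_iota (n i : ℕ) (f : A →ₗ[R] B) (e : Abelian.Ext (Qn I n) (ModuleCat.of R A) i) :
    Hm I i f (iota I n i _ e) =
      iota I n i _ (e.comp (Abelian.Ext.mk₀ (ModuleCat.ofHom f)) (add_zero i)) :=
  (iota_nat I n i (ModuleCat.ofHom f) e).symm

lemma Hm_comp (i : ℕ) (g : B →ₗ[R] C) (f : A →ₗ[R] B) :
    Hm I i (g ∘ₗ f) = Hm I i g ∘ₗ Hm I i f := by
  unfold Hm
  rw [ModuleCat.ofHom_comp, Functor.map_comp, ModuleCat.hom_comp]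

lemma Hm_comp_apply (i : ℕ) (g : B →ₗ[R] C) (f : A →ₗ[R] B) (x) :
    Hm I i g (Hm I i f x) = Hm I i (g ∘ₗ f) x := by
  rw [Hm_comp]; rfl

lemma Hm_id (i : ℕ) : Hm I i (LinearMap.id : A →ₗ[R] A) = LinearMap.id := by
  unfold Hm
  rw [ModuleCat.ofHom_id, CategoryTheory.Functor.map_id, ModuleCat.hom_id]

lemma Hm_smul (i : ℕ) (r : R) (f : A →ₗ[R] B) : Hm I i (r • f) = r • Hm I i f := by
  ext x
  obtain ⟨n, e, rfl⟩ := iota_surj I x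
  rw [LinearMap.smul_apply, Hm_iota, Hm_iota, ← map_smul]
  congr 1
  rw [show ModuleCat.ofHom (r • f) = r • ModuleCat.ofHom f from rfl, Abelian.Ext.mk₀_smul,
    Abelian.Ext.comp_smul]

lemma Hm_zero (i : ℕ) : Hm I i (0 : A →ₗ[R] B) = 0 := by
  have := Hm_smul I i (0 : R) (0 : A →ₗ[R] B)
  simpa using this

/-- `0 → A → B → C → 0` is exact -/
structure SES (f : A →ₗ[R] B) (g : B →ₗ[R] C) : Prop where
  inj : Function.Injective f
  ex : Function.Exact f g
  surj : Function.Surjective g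

variable {f : A →ₗ[R] B} {g : B →ₗ[R] C}

/-- as a short complex -/
def SES.sc (h : SES f g) : ShortComplex (ModuleCat.{0} R) :=
  ShortComplex.mk (ModuleCat.ofHom f) (ModuleCat.ofHom g) (by
    rw [← ModuleCat.ofHom_comp, h.ex.linearMap_comp_eq_zero]; rfl)

lemma SES.shortExact (h : SES f g) : h.sc.ShortExact where
  exact := (ShortComplex.moduleCat_exact_iff _).2 (fun x hx => (h.ex x).1 hx)
  mono_f := (ModuleCat.mono_iff_injective _).2 h.inj
  epi_g := (ModuleCat.epi_iff_surjective _).2 h.surj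

/-- the extension class -/
def SES.cls (h : SES f g) : Abelian.Ext (ModuleCat.of R C) (ModuleCat.of R A) 1 :=
  h.shortExact.extClass

section extlevel
variable (h : SES f g) {X : ModuleCat.{0} R} {n m : ℕ}

lemma SES.ext1 (x : Abelian.Ext X (ModuleCat.of R A) m) (hn : n + 1 = m)
    (hx : x.comp (Abelian.Ext.mk₀ (ModuleCat.ofHom f)) (add_zero _) = 0) :
    ∃ y : Abelian.Ext X (ModuleCat.of R C) n, y.comp h.cls hn = x :=
  Abelian.Ext.covariant_sequence_exact₁ _ h.shortExact x hx hn

lemma SES.ext2 (h : SES f g) (x : Abelian.Ext X (ModuleCat.of R B) m)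
    (hx : x.comp (Abelian.Ext.mk₀ (ModuleCat.ofHom g)) (add_zero _) = 0) :
    ∃ y : Abelian.Ext X (ModuleCat.of R A) m,
      y.comp (Abelian.Ext.mk₀ (ModuleCat.ofHom f)) (add_zero _) = x :=
  Abelian.Ext.covariant_sequence_exact₂ _ h.shortExact x hx

lemma SES.ext3 (x : Abelian.Ext X (ModuleCat.of R C) n) (hn : n + 1 = m)
    (hx : x.comp h.cls hn = 0) :
    ∃ y : Abelian.Ext X (ModuleCat.of R B) n,
      y.comp (Abelian.Ext.mk₀ (ModuleCat.ofHom g)) (add_zero _) = x :=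
  Abelian.Ext.covariant_sequence_exact₃ _ h.shortExact x hn hx

lemma SES.cext1 (x : Abelian.Ext (ModuleCat.of R A) X n) (hn : 1 + n = m)
    (hx : h.cls.comp x hn = 0) :
    ∃ y : Abelian.Ext (ModuleCat.of R B) X n,
      (Abelian.Ext.mk₀ (ModuleCat.ofHom f)).comp y (zero_add _) = x :=
  Abelian.Ext.contravariant_sequence_exact₁ h.shortExact _ x hn hx

lemma SES.cext2 (h : SES f g) (x : Abelian.Ext (ModuleCat.of R B) X n)
    (hx : (Abelian.Ext.mk₀ (ModuleCat.ofHom f)).comp x (zero_add _) = 0) :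
    ∃ y : Abelian.Ext (ModuleCat.of R C) X n,
      (Abelian.Ext.mk₀ (ModuleCat.ofHom g)).comp y (zero_add _) = x :=
  Abelian.Ext.contravariant_sequence_exact₂ h.shortExact _ x hx

lemma SES.cext3 (x : Abelian.Ext (ModuleCat.of R C) X m) (hn : 1 + n = m)
    (hx : (Abelian.Ext.mk₀ (ModuleCat.ofHom g)).comp x (zero_add _) = 0) :
    ∃ y : Abelian.Ext (ModuleCat.of R A) X n, h.cls.comp y hn = x :=
  Abelian.Ext.contravariant_sequence_exact₃ h.shortExact _ x hx hn

end extlevel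

lemma SES.exists_delta (h : SES f g) (i : ℕ) : ∃ d : locH I i C →ₗ[R] locH I (i+1) A,
    ∀ n e, d (iota I n i _ e) = iota I n (i+1) _ (e.comp h.cls rfl) := by
  refine exists_desc I i _ _ (fun n =>
    { toFun := fun e => iota I n (i+1) _ (e.comp h.cls rfl)
      map_add' := fun a b => by rw [Abelian.Ext.add_comp, map_add]
      map_smul' := fun r a => by rw [Abelian.Ext.smul_comp, map_smul]; rfl }) ?_
  intro n m hnm e
  simp only [LinearMap.coe_mk, AddHom.coe_mk]
  rw [← iota_restr I hnm]
  congr 1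
  rw [Abelian.Ext.comp_assoc]
  lia

/-- connecting map -/
def SES.delta (h : SES f g) (i : ℕ) : locH I i C →ₗ[R] locH I (i+1) A :=
  (h.exists_delta I i).choose

lemma SES.delta_iota (h : SES f g) (i n : ℕ) (e) :
    h.delta I i (iota I n i _ e) = iota I n (i+1) _ (e.comp h.cls rfl) :=
  (h.exists_delta I i).choose_spec n e

lemma SES.delta_g (h : SES f g) (i : ℕ) (x) : h.delta I i (Hm I i g x) = 0 := by
  obtain ⟨n, e, rfl⟩ := iota_surj I x
  rw [Hm_iota, h.delta_iota, Abelian.Ext.comp_assoc_of_second_deg_zero]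
  have : (Abelian.Ext.mk₀ (ModuleCat.ofHom g)).comp h.cls (zero_add 1) = 0 :=
    h.shortExact.comp_extClass
  rw [this, Abelian.Ext.comp_zero, map_zero]

lemma SES.f_delta (h : SES f g) (i : ℕ) (x) : Hm I (i+1) f (h.delta I i x) = 0 := by
  obtain ⟨n, e, rfl⟩ := iota_surj I x
  rw [h.delta_iota, Hm_iota, Abelian.Ext.comp_assoc_of_third_deg_zero]
  have : h.cls.comp (Abelian.Ext.mk₀ (ModuleCat.ofHom f)) (add_zero 1) = 0 :=
    h.shortExact.extClass_comp
  rw [this, Abelian.Ext.comp_zero, map_zero]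

lemma SES.g_f (h : SES f g) (i : ℕ) (x) : Hm I i g (Hm I i f x) = 0 := by
  rw [Hm_comp_apply, h.ex.linearMap_comp_eq_zero, Hm_zero]; rfl

lemma SES.ex1 (h : SES f g) (i : ℕ) (x : locH I (i+1) A) (hx : Hm I (i+1) f x = 0) :
    ∃ y, h.delta I i y = x := by
  obtain ⟨n, e, rfl⟩ := iota_surj I x
  rw [Hm_iota] at hx
  obtain ⟨m, hm, h0⟩ := iota_zero I _ hx
  have h1 : ((Abelian.Ext.mk₀ (restr I hm)).comp e (zero_add _)).comp
    (Abelian.Ext.mk₀ (ModuleCat.ofHom f)) (add_zero _) = 0 := by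
    rw [Abelian.Ext.comp_assoc_of_third_deg_zero]; exact h0
  obtain ⟨y, hy⟩ := h.ext1 _ rfl h1
  refine ⟨iota I m i _ y, ?_⟩
  rw [h.delta_iota, ← iota_restr I hm _ _ e]
  exact congrArg _ hy

lemma SES.ex2 (h : SES f g) (i : ℕ) (x : locH I i B) (hx : Hm I i g x = 0) :
    ∃ y, Hm I i f y = x := by
  obtain ⟨n, e, rfl⟩ := iota_surj I x
  rw [Hm_iota] at hx
  obtain ⟨m, hm, h0⟩ := iota_zero I _ hx
  have h1 : ((Abelian.Ext.mk₀ (restr I hm)).comp e (zero_add _)).comp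
    (Abelian.Ext.mk₀ (ModuleCat.ofHom g)) (add_zero _) = 0 := by
    rw [Abelian.Ext.comp_assoc_of_third_deg_zero]; exact h0
  obtain ⟨y, hy⟩ := h.ext2 _ h1
  refine ⟨iota I m i _ y, ?_⟩
  rw [Hm_iota, ← iota_restr I hm _ _ e]
  exact congrArg _ hy

lemma SES.ex3 (h : SES f g) (i : ℕ) (x : locH I i C) (hx : h.delta I i x = 0) :
    ∃ y, Hm I i g y = x := by
  obtain ⟨n, e, rfl⟩ := iota_surj I x
  rw [h.delta_iota] at hx
  obtain ⟨m, hm, h0⟩ := iota_zero I _ hx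
  have h1 : ((Abelian.Ext.mk₀ (restr I hm)).comp e (zero_add _)).comp
    h.cls rfl = 0 := by
    rw [Abelian.Ext.comp_assoc (h₁₂ := zero_add _) (h₂₃ := rfl) (h := by lia)]; exact h0
  obtain ⟨y, hy⟩ := h.ext3 _ rfl h1
  refine ⟨iota I m i _ y, ?_⟩
  rw [Hm_iota, ← iota_restr I hm _ _ e]
  exact congrArg _ hy

end LES

/-- L1: local cohomology is torsion -/
lemma torsion (I : Ideal R) {i : ℕ} {Y : ModuleCat.{0} R} (x : HH I i Y) :
    ∃ n, ∀ a ∈ I ^ n, a • x = 0 := by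
  obtain ⟨n, e, rfl⟩ := iota_surj I x
  refine ⟨n, fun a ha => ?_⟩
  rw [← map_smul]
  have h1 : a • e = (Abelian.Ext.mk₀ (a • 𝟙 (Qn I n))).comp e (zero_add i) := by
    rw [Abelian.Ext.mk₀_smul, Abelian.Ext.smul_comp, Abelian.Ext.mk₀_id_comp]
  have h2 : a • 𝟙 (Qn I n) = 0 := by
    refine ModuleCat.hom_ext (LinearMap.ext fun x => ?_)
    obtain ⟨r, rfl⟩ := Submodule.Quotient.mk_surjective _ x
    change a • (Submodule.Quotient.mk r : R ⧸ I^n) = 0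
    rw [← Submodule.Quotient.mk_smul, Submodule.Quotient.mk_eq_zero]
    exact Ideal.mul_mem_right _ _ ha
  rw [h1, h2, Abelian.Ext.mk₀_zero, Abelian.Ext.zero_comp, map_zero]

end LC

namespace LC

open Limits Abelian

section L2

lemma SES.cls_nat {A B C A' B' C' : Type} [AddCommGroup A] [AddCommGroup B] [AddCommGroup C]
    [Module R A] [Module R B] [Module R C] [AddCommGroup A'] [AddCommGroup B'] [AddCommGroup C']
    [Module R A'] [Module R B'] [Module R C'] {f : A →ₗ[R] B} {g : B →ₗ[R] C}
    {f' : A' →ₗ[R] B'} {g' : B' →ₗ[R] C'} (h : SES f g) (h' : SES f' g')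
    (a : A →ₗ[R] A') (b : B →ₗ[R] B') (c : C →ₗ[R] C') (h1 : f' ∘ₗ a = b ∘ₗ f)
    (h2 : g' ∘ₗ b = c ∘ₗ g) :
    h.cls.comp (Abelian.Ext.mk₀ (ModuleCat.ofHom a)) (add_zero 1) =
      (Abelian.Ext.mk₀ (ModuleCat.ofHom c)).comp h'.cls (zero_add 1) := by
  let F : h.sc ⟶ h'.sc :=
    { τ₁ := ModuleCat.ofHom a, τ₂ := ModuleCat.ofHom b, τ₃ := ModuleCat.ofHom c
      comm₁₂ := ModuleCat.hom_ext h1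
      comm₂₃ := ModuleCat.hom_ext h2 }
  exact ShortComplex.ShortExact.extClass_naturality h.shortExact h'.shortExact F

lemma mk₀_comp_of_factor {A B C : Type} [AddCommGroup A] [AddCommGroup B] [AddCommGroup C]
    [Module R A] [Module R B] [Module R C] (f : A →ₗ[R] B) (g : B →ₗ[R] C) {Y : ModuleCat.{0} R}
    {n : ℕ} (e : Abelian.Ext (ModuleCat.of R C) Y n) :
    (Abelian.Ext.mk₀ (ModuleCat.ofHom (g ∘ₗ f))).comp e (zero_add n) =
    (Abelian.Ext.mk₀ (ModuleCat.ofHom f)).comp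
      ((Abelian.Ext.mk₀ (ModuleCat.ofHom g)).comp e (zero_add n)) (zero_add n) := by
  rw [Abelian.Ext.mk₀_comp_mk₀_assoc]
  rfl

lemma SES.of_submodule {A : Type} [AddCommGroup A] [Module R A] (K : Submodule R A) :
    SES K.subtype K.mkQ where
  inj := K.subtype_injective
  ex := LinearMap.exact_subtype_mkQ K
  surj := K.mkQ_surjective

lemma SES.of_surj {B C : Type} [AddCommGroup B] [Module R B] [AddCommGroup C] [Module R C]
    (g : B →ₗ[R] C) (hg : Function.Surjective g) : SES (LinearMap.ker g).subtype g where
  inj := Submodule.subtype_injective _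
  ex := LinearMap.exact_subtype_ker_map g
  surj := hg

variable [IsNoetherianRing R] (I : Ideal R) (N : Type) [AddCommGroup N] [Module R N]

lemma L2_aux (k : ℕ) (hk : ∀ a ∈ I ^ k, ∀ x : N, a • x = 0) (j : ℕ) :
    ∀ (L : Type) [AddCommGroup L] [Module R L] [Module.Finite R L], ∃ s : ℕ,
      ∀ (L' : Type) [AddCommGroup L'] [Module R L'] (t : L' →ₗ[R] L),
        (∀ x, t x ∈ I ^ s • (⊤ : Submodule R L)) →
        ∀ e : Abelian.Ext (ModuleCat.of R L) (ModuleCat.of R N) j,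
          (Abelian.Ext.mk₀ (ModuleCat.ofHom t)).comp e (zero_add j) = 0 := by
  induction j with
  | zero =>
    intro L _ _ _
    refine ⟨k, fun L' _ _ t ht e => ?_⟩
    obtain ⟨f, rfl⟩ := Abelian.Ext.mk₀_bijective _ _ |>.2 e
    rw [Abelian.Ext.mk₀_comp_mk₀, Abelian.Ext.mk₀_eq_zero_iff]
    refine ModuleCat.hom_ext (LinearMap.ext fun x => ?_)
    change f.hom (t x) = 0
    have hle : I ^ k • (⊤ : Submodule R L) ≤ LinearMap.ker f.hom := by
      rw [Submodule.smul_le]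
      intro a ha y _
      rw [LinearMap.mem_ker, map_smul]
      exact hk a ha _
    exact hle (ht x)
  | succ j ih =>
    intro L _ _ _
    obtain ⟨m, π, hπ⟩ := Module.Finite.exists_fin' R L
    set K := LinearMap.ker π with hK
    obtain ⟨s₀, hs₀⟩ := ih K
    obtain ⟨q, hq⟩ := Ideal.exists_pow_inf_eq_pow_smul I K
    refine ⟨s₀ + q, fun L' _ _ t ht e => ?_⟩
    set s := s₀ + q
    let BF : Submodule R (Fin m → R) := I ^ s • ⊤
    let CL : Submodule R L := I ^ s • ⊤
    have hmap : BF.map π = CL := by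
      simp only [BF, CL]
      rw [Submodule.map_smul'', Submodule.map_top, LinearMap.range_eq_top.2 hπ]
    let π' : BF →ₗ[R] CL := π.restrict (fun x hx => hmap ▸ Submodule.mem_map_of_mem hx)
    have hπ' : Function.Surjective π' := by
      rintro ⟨y, hy⟩
      rw [← hmap] at hy
      obtain ⟨x, hx, rfl⟩ := hy
      exact ⟨⟨x, hx⟩, rfl⟩
    let h := SES.of_surj π hπ
    let h' := SES.of_surj π' hπ'
    let a : LinearMap.ker π' →ₗ[R] K :=
      (BF.subtype ∘ₗ (LinearMap.ker π').subtype).codRestrict K (fun x => by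
        have := x.2
        rw [LinearMap.mem_ker] at this ⊢
        exact congrArg Subtype.val this)
    have hnat := SES.cls_nat h' h a BF.subtype CL.subtype rfl rfl
    have hproj : Projective (ModuleCat.of R (Fin m → R)) :=
      (IsProjective.iff_projective _).1 inferInstance
    have h0 : (Abelian.Ext.mk₀ (ModuleCat.ofHom π)).comp e (zero_add _) = 0 :=
      Abelian.Ext.eq_zero_of_projective _
    obtain ⟨y, rfl⟩ := h.cext3 e (add_comm 1 j) h0
    have hax : ∀ x, a x ∈ I ^ s₀ • (⊤ : Submodule R K) := fun x => by
      rw [Submodule.mem_smul_top_iff]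
      have hx : ((a x : K) : Fin m → R) ∈ I ^ s • (⊤ : Submodule R (Fin m → R)) ⊓ K :=
        ⟨x.1.2, (a x).2⟩
      rw [hq s (by simp [s])] at hx
      have hsq : s - q = s₀ := by simp [s]
      rw [hsq] at hx
      exact (Submodule.smul_mono (le_refl (I ^ s₀)) (inf_le_right : (I ^ q • ⊤ ⊓ K) ≤ K)) hx
    have hya := hs₀ (LinearMap.ker π') a hax y
    let t' : L' →ₗ[R] CL := t.codRestrict CL ht
    have : t = CL.subtype ∘ₗ t' := rfl
    rw [this, mk₀_comp_of_factor]
    have h5 : (Abelian.Ext.mk₀ (ModuleCat.ofHom CL.subtype)).comp (h.cls.comp y (add_comm 1 j)) (zero_add _) = 0 := by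
      rw [← Abelian.Ext.comp_assoc (h₁₂ := zero_add _) (h₂₃ := add_comm 1 j) (h := by lia), ← hnat,
        Abelian.Ext.comp_assoc_of_second_deg_zero]
      rw [hya, Abelian.Ext.comp_zero]
    rw [h5, Abelian.Ext.comp_zero]

lemma L2 (k : ℕ) (hk : ∀ a ∈ I ^ k, ∀ x : N, a • x = 0) (i : ℕ) (hi : 0 < i) :
    Subsingleton (locH I i N) := by
  obtain ⟨j, rfl⟩ : ∃ j, i = j + 1 := ⟨i - 1, by lia⟩
  refine subsingleton_of_forall_eq 0 fun x => ?_
  obtain ⟨n, e, rfl⟩ := iota_surj I x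
  have hS : ∀ n, SES (I ^ n).subtype (Submodule.mkQ (I ^ n)) := fun n => SES.of_submodule _
  have hproj : Projective (ModuleCat.of R R) :=
      (IsProjective.iff_projective _).1 inferInstance
  obtain ⟨y, rfl⟩ := (hS n).cext3 e (add_comm 1 j) (Abelian.Ext.eq_zero_of_projective _)
  obtain ⟨s, hs⟩ := L2_aux I N k hk j (I ^ n : Ideal R)
  have hle : I ^ (n + s) ≤ I ^ n := Ideal.pow_le_pow_right (by lia)
  have h1 := hs _ (Submodule.inclusion hle) (fun x => by
    rw [Submodule.mem_smul_top_iff]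
    have : (x : R) ∈ I ^ s * I ^ n := by rw [← pow_add, add_comm]; exact x.2
    exact this) y
  have hnat := SES.cls_nat (hS (n+s)) (hS n) (Submodule.inclusion hle) LinearMap.id
    (Submodule.mapQ _ _ LinearMap.id hle) rfl rfl
  rw [← iota_restr I (show n ≤ n + s by lia)]
  have h5 : (Abelian.Ext.mk₀ (restr I (show n ≤ n + s by lia))).comp ((hS n).cls.comp y (add_comm 1 j)) (zero_add _) = 0 := by
    rw [← Abelian.Ext.comp_assoc (h₁₂ := zero_add _) (h₂₃ := add_comm 1 j) (h := by lia)]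
    change ((Abelian.Ext.mk₀ (ModuleCat.ofHom (Submodule.mapQ _ _ LinearMap.id hle))).comp _ _).comp _ _ = _
    rw [← hnat, Abelian.Ext.comp_assoc_of_second_deg_zero]
    rw [h1, Abelian.Ext.comp_zero]
  rw [h5, map_zero]

end L2

section L3

variable (I : Ideal R) (N : Type) [AddCommGroup N] [Module R N]

lemma exists_gam : ∃ d : locH I 0 N →ₗ[R] N,
    ∀ n (e : Qn I n ⟶ ModuleCat.of R N), d (iota I n 0 _ (Abelian.Ext.mk₀ e)) = e.hom (Submodule.Quotient.mk 1) := by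
  obtain ⟨d, hd⟩ := exists_desc I 0 (ModuleCat.of R N) (ModuleCat.of R N) (fun n =>
    { toFun := fun e => (Abelian.Ext.linearEquiv₀ (R := R) e).hom (Submodule.Quotient.mk 1)
      map_add' := fun a b => by rw [map_add]; rfl
      map_smul' := fun r a => by rw [map_smul]; rfl }) (by
        intro n m h e
        obtain ⟨f, rfl⟩ := (Abelian.Ext.linearEquiv₀ (R := R)).symm.surjective e
        have h1 : (Abelian.Ext.linearEquiv₀ (R := R)).symm f = Abelian.Ext.mk₀ f := rfl
        simp only [LinearMap.coe_mk, AddHom.coe_mk, LinearEquiv.apply_symm_apply]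
        rw [h1, Abelian.Ext.mk₀_comp_mk₀]
        have h2 : (Abelian.Ext.linearEquiv₀ (R := R)) (Abelian.Ext.mk₀ (restr I h ≫ f)) = restr I h ≫ f :=
          (Abelian.Ext.linearEquiv₀ (R := R)).apply_symm_apply _
        rw [h2]
        rfl)
  refine ⟨d, fun n e => ?_⟩
  refine (hd n _).trans ?_
  have h2 : (Abelian.Ext.linearEquiv₀ (R := R)) (Abelian.Ext.mk₀ e) = e :=
    (Abelian.Ext.linearEquiv₀ (R := R)).apply_symm_apply _
  simp only [LinearMap.coe_mk, AddHom.coe_mk]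
  rw [h2]

/-- identification of `H^0` with the torsion -/
def gam : locH I 0 N →ₗ[R] N := (exists_gam I N).choose

lemma gam_iota (n : ℕ) (e : Qn I n ⟶ ModuleCat.of R N) :
    gam I N (iota I n 0 _ (Abelian.Ext.mk₀ e)) = e.hom (Submodule.Quotient.mk 1) :=
  (exists_gam I N).choose_spec n e

lemma exists_iota_mk₀ (x : locH I 0 N) : ∃ n e, iota I n 0 (ModuleCat.of R N) (Abelian.Ext.mk₀ e) = x := by
  obtain ⟨n, e, rfl⟩ := iota_surj I x
  obtain ⟨f, rfl⟩ := Abelian.Ext.mk₀_bijective _ _ |>.2 e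
  exact ⟨n, f, rfl⟩

lemma gam_inj : Function.Injective (gam I N) := by
  rw [injective_iff_map_eq_zero]
  intro x hx
  obtain ⟨n, e, rfl⟩ := exists_iota_mk₀ I N x
  rw [gam_iota] at hx
  have : e = 0 := by
    refine ModuleCat.hom_ext (LinearMap.ext fun x => ?_)
    obtain ⟨r, rfl⟩ := Submodule.Quotient.mk_surjective _ x
    have : (Submodule.Quotient.mk r : R ⧸ I ^ n) = r • Submodule.Quotient.mk 1 := by
      rw [← Submodule.Quotient.mk_smul, smul_eq_mul, mul_one]
    rw [this]
    refine (map_smul e.hom r _).trans ?_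
    rw [hx, smul_zero]; rfl
  rw [this, Abelian.Ext.mk₀_zero, map_zero]

lemma gam_range (y : N) (n : ℕ) (hy : ∀ a ∈ I ^ n, a • y = 0) : ∃ x, gam I N x = y := by
  let f : (R ⧸ I ^ n) →ₗ[R] N := Submodule.liftQ _ (LinearMap.toSpanSingleton R N y) (fun a ha => hy a ha)
  refine ⟨iota I n 0 _ (Abelian.Ext.mk₀ (ModuleCat.ofHom f)), ?_⟩
  rw [gam_iota]
  change (1:R) • y = y
  exact one_smul _ _

lemma gam_nat {N' : Type} [AddCommGroup N'] [Module R N'] (f : N →ₗ[R] N') (x) :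
    gam I N' (Hm I 0 f x) = f (gam I N x) := by
  obtain ⟨n, e, rfl⟩ := exists_iota_mk₀ I N x
  rw [Hm_iota, Abelian.Ext.mk₀_comp_mk₀, gam_iota, gam_iota]
  rfl

lemma Hm_zero_inj {N' : Type} [AddCommGroup N'] [Module R N'] (f : N →ₗ[R] N')
    (hf : Function.Injective f) : Function.Injective (Hm I 0 f) := by
  intro x y h
  apply gam_inj
  apply hf
  rw [← gam_nat, ← gam_nat, h]

end L3

end LC

namespace LC

section Serre

variable (S : Submonoid R) (I : Ideal R)

/-- every element is killed by an element of `S` -/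
def Nul (X : Type) [AddCommGroup X] [Module R X] : Prop := ∀ x : X, ∃ s ∈ S, s • x = 0

/-- the ideal of elements killing `x` up to `S` -/
def kid {X : Type} [AddCommGroup X] [Module R X] (x : X) : Ideal R where
  carrier := {y | ∃ s ∈ S, s • y • x = 0}
  add_mem' := by
    rintro a b ⟨s, hs, h⟩ ⟨t, ht, h'⟩
    refine ⟨s * t, S.mul_mem hs ht, ?_⟩
    rw [add_smul, smul_add]
    rw [mul_comm s t, mul_smul, h, mul_comm t s, mul_smul, h']; simp
  zero_mem' := ⟨1, S.one_mem, by simp⟩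
  smul_mem' := by
    rintro c a ⟨s, hs, h⟩
    refine ⟨s, hs, ?_⟩
    rw [smul_eq_mul, mul_smul, smul_comm s c, h, smul_zero]

lemma mem_kid {X : Type} [AddCommGroup X] [Module R X] (x : X) (y : R) :
    y ∈ kid S x ↔ ∃ s ∈ S, s • y • x = 0 := Iff.rfl

/-- the Serre class of modules killed by a power of `I` up to `S` -/
def CC (X : Type) [AddCommGroup X] [Module R X] : Prop := ∃ n : ℕ, ∀ x : X, I ^ n ≤ kid S x

variable {S I}
variable {X Y Z : Type} [AddCommGroup X] [Module R X] [AddCommGroup Y] [Module R Y]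
  [AddCommGroup Z] [Module R Z]

lemma Nul.of_exact {f : X →ₗ[R] Y} {g : Y →ₗ[R] Z} (h : ∀ y, g y = 0 → ∃ x, f x = y)
    (hX : Nul S X) (hZ : Nul S Z) : Nul S Y := by
  intro y
  obtain ⟨s, hs, h1⟩ := hZ (g y)
  rw [← map_smul] at h1
  obtain ⟨x, hx⟩ := h _ h1
  obtain ⟨t, ht, h2⟩ := hX x
  exact ⟨t * s, S.mul_mem ht hs, by rw [mul_smul, ← hx, ← map_smul, h2, map_zero]⟩

lemma CC.of_exact {f : X →ₗ[R] Y} {g : Y →ₗ[R] Z} (h : ∀ y, g y = 0 → ∃ x, f x = y)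
    (hX : CC S I X) (hZ : CC S I Z) : CC S I Y := by
  obtain ⟨n, hn⟩ := hX
  obtain ⟨m, hm⟩ := hZ
  refine ⟨n + m, fun y => ?_⟩
  rw [pow_add, Ideal.mul_le]
  intro a ha b hb
  obtain ⟨s, hs, h1⟩ := hm (g y) hb
  rw [← map_smul, ← map_smul] at h1
  obtain ⟨x, hx⟩ := h _ h1
  obtain ⟨t, ht, h2⟩ := hn x ha
  refine ⟨t * s, S.mul_mem ht hs, ?_⟩
  have : (t * s) • (a * b) • y = t • a • s • b • y := by
    simp only [smul_smul]; congr 1; ring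
  rw [this, ← hx, ← map_smul, ← map_smul, h2, map_zero]

lemma Nul.CC (h : Nul S X) : CC S I X := ⟨0, fun x y _ => by
  obtain ⟨s, hs, h1⟩ := h x
  exact ⟨s, hs, by rw [smul_comm, h1, smul_zero]⟩⟩

lemma Nul.of_subsingleton [Subsingleton X] : Nul S X := fun x => ⟨1, S.one_mem, Subsingleton.elim _ _⟩

lemma CC.of_subsingleton [Subsingleton X] : LC.CC S I X := (Nul.of_subsingleton).CC

lemma nul_bot_iff : Nul (⊥ : Submonoid R) X ↔ Subsingleton X := by
  constructor
  · intro h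
    refine subsingleton_of_forall_eq 0 fun x => ?_
    obtain ⟨s, hs, h1⟩ := h x
    rw [Submonoid.mem_bot] at hs
    simpa [hs] using h1
  · intro h; exact Nul.of_subsingleton

lemma CC.of_surj {f : X →ₗ[R] Y} (hf : Function.Surjective f) (hX : LC.CC S I X) : LC.CC S I Y :=
  CC.of_exact (g := (0 : Y →ₗ[R] PUnit)) (fun y _ => hf y) hX CC.of_subsingleton

lemma CC.of_inj {f : X →ₗ[R] Y} (hf : Function.Injective f) (hY : LC.CC S I Y) : LC.CC S I X :=
  CC.of_exact (f := (0 : PUnit →ₗ[R] X)) (g := f)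
    (fun y hy => ⟨0, by rw [map_zero]; exact (hf (by rw [hy, map_zero])).symm⟩) CC.of_subsingleton hY

lemma Nul.of_surj {f : X →ₗ[R] Y} (hf : Function.Surjective f) (hX : Nul S X) : Nul S Y :=
  Nul.of_exact (g := (0 : Y →ₗ[R] PUnit)) (fun y _ => hf y) hX Nul.of_subsingleton

lemma Nul.of_inj {f : X →ₗ[R] Y} (hf : Function.Injective f) (hY : Nul S Y) : Nul S X :=
  Nul.of_exact (f := (0 : PUnit →ₗ[R] X)) (g := f)
    (fun y hy => ⟨0, by rw [map_zero]; exact (hf (by rw [hy, map_zero])).symm⟩) Nul.of_subsingleton hY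

lemma Nul.mono {S' : Submonoid R} (h : S ≤ S') (hX : Nul S X) : Nul S' X := fun x => by
  obtain ⟨s, hs, h1⟩ := hX x
  exact ⟨s, h hs, h1⟩

end Serre

section SESlem

variable {S : Submonoid R} {I : Ideal R}
variable {A B C : Type} [AddCommGroup A] [Module R A] [AddCommGroup B] [Module R B]
  [AddCommGroup C] [Module R C] {f : A →ₗ[R] B} {g : B →ₗ[R] C}

lemma SES.nul2 (h : SES f g) (i : ℕ) (hA : Nul S (locH I i A)) (hC : Nul S (locH I i C)) :
    Nul S (locH I i B) := Nul.of_exact (h.ex2 I i) hA hC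

lemma SES.nul3 (h : SES f g) (i : ℕ) (hB : Nul S (locH I i B)) (hA : Nul S (locH I (i+1) A)) :
    Nul S (locH I i C) := Nul.of_exact (h.ex3 I i) hB hA

lemma SES.nul1 (h : SES f g) (i : ℕ) (hC : Nul S (locH I i C)) (hB : Nul S (locH I (i+1) B)) :
    Nul S (locH I (i+1) A) := Nul.of_exact (h.ex1 I i) hC hB

lemma SES.cc2 (h : SES f g) (i : ℕ) (hA : CC S I (locH I i A)) (hC : CC S I (locH I i C)) :
    CC S I (locH I i B) := CC.of_exact (h.ex2 I i) hA hC

lemma SES.cc3 (h : SES f g) (i : ℕ) (hB : CC S I (locH I i B)) (hA : CC S I (locH I (i+1) A)) :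
    CC S I (locH I i C) := CC.of_exact (h.ex3 I i) hB hA

lemma SES.cc1 (h : SES f g) (i : ℕ) (hC : CC S I (locH I i C)) (hB : CC S I (locH I (i+1) B)) :
    CC S I (locH I (i+1) A) := CC.of_exact (h.ex1 I i) hC hB

lemma Hm_equiv (i : ℕ) (e : A ≃ₗ[R] B) : Function.Bijective (Hm I i e.toLinearMap) := by
  constructor
  · intro x y h
    have := congrArg (Hm I i e.symm.toLinearMap) h
    simpa [Hm_comp_apply, Hm_id] using this
  · intro y
    exact ⟨Hm I i e.symm.toLinearMap y, by simp [Hm_comp_apply, Hm_id]⟩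

/-- multiplication by `x` on `H^i` is induced by multiplication by `x` -/
lemma Hm_lsmul (i : ℕ) (x : R) (u : locH I i A) : Hm I i (LinearMap.lsmul R A x) u = x • u := by
  have : LinearMap.lsmul R A x = x • LinearMap.id := rfl
  rw [this, Hm_smul, Hm_id]; rfl

lemma smul_eq_zero_of (i : ℕ) (x : R) (hx : ∀ u : A, x • u = 0) (u : locH I i A) : x • u = 0 := by
  rw [← Hm_lsmul]
  have : LinearMap.lsmul R A x = 0 := LinearMap.ext fun u => hx u
  rw [this, Hm_zero]; rfl

lemma SES.of_regular (x : R) (hx : ∀ u : A, x • u = 0 → u = 0) :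
    SES (LinearMap.lsmul R A x) (Submodule.mkQ (LinearMap.range (LinearMap.lsmul R A x))) where
  inj := by
    rw [injective_iff_map_eq_zero]; exact hx
  ex := by
    rw [LinearMap.exact_iff]; simp
  surj := Submodule.mkQ_surjective _

end SESlem

end LC

namespace LC

lemma avoid (F : Finset (Ideal R)) (hF : ∀ P ∈ F, P.IsPrime) (J : Ideal R) (x : R)
    (h : ∀ P ∈ F, ¬ (x ∈ P ∧ J ≤ P)) : ∃ j ∈ J, ∀ P ∈ F, x + j ∉ P := by
  classical
  induction hn : F.card generalizing F with
  | zero =>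
    rw [Finset.card_eq_zero] at hn
    exact ⟨0, J.zero_mem, by simp [hn]⟩
  | succ n ih =>
    have hne : F.Nonempty := by rw [← Finset.card_pos]; lia
    obtain ⟨P, hP⟩ := F.exists_minimal hne
    have hPF := hP.1
    have hprime := hF P hPF
    obtain ⟨j, hj, hj'⟩ := ih (F.erase P) (fun Q hQ => hF Q (Finset.mem_of_mem_erase hQ))
      (fun Q hQ => h Q (Finset.mem_of_mem_erase hQ)) (by rw [Finset.card_erase_of_mem hPF]; lia)
    by_cases hxP : x + j ∈ P
    · have hJ : ¬ J ≤ P := fun hle => h P hPF ⟨by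
        have := P.sub_mem hxP (hle hj)
        simpa using this, hle⟩
      have hprod : ¬ (J * ∏ Q ∈ F.erase P, Q) ≤ P := by
        rw [hprime.mul_le, not_or]
        refine ⟨hJ, ?_⟩
        rw [Ideal.IsPrime.prod_le hprime]
        rintro ⟨Q, hQ, hle⟩
        have h1 := hP.2 (Finset.mem_of_mem_erase hQ) hle
        exact Finset.ne_of_mem_erase hQ (le_antisymm hle h1)
      obtain ⟨z, hz, hzP⟩ := SetLike.not_le_iff_exists.1 hprod
      have hzJ : z ∈ J := (Ideal.mul_le_left : J * (∏ Q ∈ F.erase P, Q) ≤ J) hz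
      have hzQ : ∀ Q ∈ F.erase P, z ∈ Q := fun Q hQ =>
        ((Ideal.prod_le_inf (s := F.erase P) (f := fun Q => Q)).trans (Finset.inf_le hQ)) ((Ideal.mul_le_right : J * (∏ Q ∈ F.erase P, Q) ≤ _) hz)
      refine ⟨j + z, J.add_mem hj hzJ, fun Q hQ => ?_⟩
      by_cases hQP : Q = P
      · subst hQP
        intro hmem
        rw [← add_assoc] at hmem
        exact hzP ((Ideal.add_mem_iff_right _ hxP).1 hmem)
      · intro hmem
        have hQ' := Finset.mem_erase.2 ⟨hQP, hQ⟩
        rw [← add_assoc] at hmem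
        exact hj' Q hQ' ((Ideal.add_mem_iff_left _ (hzQ Q hQ')).1 hmem)
    · refine ⟨j, hj, fun Q hQ => ?_⟩
      by_cases hQP : Q = P
      · rwa [hQP]
      · exact hj' Q (Finset.mem_erase.2 ⟨hQP, hQ⟩)

/-- associated primes in elementary form -/
def IsAss (p : Ideal R) (N : Type) [AddCommGroup N] [Module R N] : Prop :=
  p.IsPrime ∧ ∃ x : N, ∀ r, r ∈ p ↔ r • x = 0

section

variable [IsNoetherianRing R] (N : Type) [AddCommGroup N] [Module R N]

lemma isAss_iff (p : Ideal R) : IsAss p N ↔ IsAssociatedPrime p N := by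
  rw [isAssociatedPrime_iff, IsAss]
  refine and_congr_right fun _ => exists_congr fun x => ?_
  rw [Ideal.ext_iff]
  refine forall_congr' fun r => ?_
  rw [Submodule.mem_colon_singleton, Submodule.mem_bot]

lemma exists_isAss {N : Type} [AddCommGroup N] [Module R N] (x : N) (hx : x ≠ 0) : ∃ p, IsAss p N ∧ ∀ r : R, r • x = 0 → r ∈ p := by
  obtain ⟨P, hP, hx⟩ := exists_le_isAssociatedPrime_of_isNoetherianRing R x hx
  refine ⟨P, (isAss_iff _ _).2 hP, fun r hr => hx ?_⟩
  rwa [Submodule.mem_colon_singleton, Submodule.mem_bot]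

lemma finite_ass [Module.Finite R N] : ∃ F : Finset (Ideal R), ∀ p, p ∈ F ↔ IsAss p N := by
  refine ⟨(associatedPrimes.finite R N).toFinset, fun p => ?_⟩
  rw [isAss_iff, Set.Finite.mem_toFinset]; rfl

variable (I : Ideal R)

/-- the `I`-torsion submodule -/
def Gam : Submodule R N where
  carrier := {y | ∃ n, ∀ a ∈ I ^ n, a • y = 0}
  add_mem' := by
    rintro x y ⟨n, hn⟩ ⟨m, hm⟩
    refine ⟨n + m, fun a ha => ?_⟩
    rw [smul_add, hn a (Ideal.pow_le_pow_right (by lia) ha), hm a (Ideal.pow_le_pow_right (by lia) ha), add_zero]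
  zero_mem' := ⟨0, by simp⟩
  smul_mem' := by
    rintro c x ⟨n, hn⟩
    exact ⟨n, fun a ha => by rw [smul_comm, hn a ha, smul_zero]⟩

lemma mem_Gam (y : N) : y ∈ Gam N I ↔ ∃ n, ∀ a ∈ I ^ n, a • y = 0 := Iff.rfl

/-- no `I`-torsion -/
def TF : Prop := ∀ y : N, (∀ a ∈ I, a • y = 0) → y = 0

variable {N I}

lemma TF.pow (h : TF N I) (n : ℕ) (y : N) (hy : ∀ a ∈ I ^ n, a • y = 0) : y = 0 := by
  induction n generalizing y with
  | zero => simpa using hy 1 (by simp)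
  | succ n ih =>
    refine ih y fun a ha => h _ fun b hb => ?_
    rw [smul_smul]
    exact hy _ (by rw [pow_succ']; exact Ideal.mul_mem_mul hb ha)

/-- a finitely generated `I`-torsion module is killed by a power of `I` -/
lemma unif [Module.Finite R N] (h : ∀ y : N, ∃ n, ∀ a ∈ I ^ n, a • y = 0) :
    ∃ n, ∀ a ∈ I ^ n, ∀ y : N, a • y = 0 := by
  obtain ⟨s, hs⟩ := Module.Finite.fg_top (R := R) (M := N)
  choose n hn using h
  refine ⟨s.sup n, fun a ha y => ?_⟩
  have : (⊤ : Submodule R N) ≤ LinearMap.ker (LinearMap.lsmul R N a) := by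
    rw [← hs, Submodule.span_le]
    intro z hz
    exact hn z a (Ideal.pow_le_pow_right (Finset.le_sup hz) ha)
  exact this (Submodule.mem_top (x := y))

lemma Gam_unif [Module.Finite R N] : ∃ n, ∀ a ∈ I ^ n, ∀ y : Gam N I, a • y = 0 := by
  apply unif
  rintro ⟨y, n, hn⟩
  exact ⟨n, fun a ha => Subtype.ext (hn a ha)⟩

lemma Gam_H [Module.Finite R N] (i : ℕ) (hi : 0 < i) : Subsingleton (locH I i (Gam N I)) := by
  obtain ⟨n, hn⟩ := Gam_unif (N := N) (I := I)
  exact L2 I _ n hn i hi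

lemma quot_TF [Module.Finite R N] : TF (N ⧸ Gam N I) I := by
  intro y hy
  obtain ⟨y, rfl⟩ := Submodule.Quotient.mk_surjective _ y
  rw [Submodule.Quotient.mk_eq_zero]
  obtain ⟨n, hn⟩ := Gam_unif (N := N) (I := I)
  refine ⟨n + 1, fun a ha => ?_⟩
  have : I ^ (n + 1) ≤ LinearMap.ker (LinearMap.toSpanSingleton R N y) := by
    rw [pow_succ, Ideal.mul_le]
    intro r hr s hs
    rw [LinearMap.mem_ker, LinearMap.toSpanSingleton_apply, mul_smul]
    have h1 := hy s hs
    rw [← Submodule.Quotient.mk_smul, Submodule.Quotient.mk_eq_zero] at h1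
    exact congrArg Subtype.val (hn r hr ⟨_, h1⟩)
  exact this ha

lemma quot_bij [Module.Finite R N] (i : ℕ) (hi : 0 < i) :
    Function.Bijective (Hm I i (Gam N I).mkQ) := by
  have h := SES.of_submodule (Gam N I)
  have := Gam_H (N := N) (I := I) i hi
  have := Gam_H (N := N) (I := I) (i+1) (by lia)
  constructor
  · rw [injective_iff_map_eq_zero]
    intro x hx
    obtain ⟨y, rfl⟩ := h.ex2 I i x hx
    rw [Subsingleton.elim y 0, map_zero]
  · intro x
    exact h.ex3 I i x (Subsingleton.elim _ _)

lemma TF.H0 (h : TF N I) : Subsingleton (locH I 0 N) := by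
  refine subsingleton_of_forall_eq 0 fun x => ?_
  apply gam_inj
  rw [map_zero]
  obtain ⟨n, hn⟩ := torsion I x
  exact h.pow n _ fun a ha => by rw [← map_smul, hn a ha, map_zero]

lemma TF.ass (h : TF N I) {p} (hp : IsAss p N) : ¬ I ≤ p := by
  intro hle
  obtain ⟨h1, x, hx⟩ := hp
  have : x = 0 := h x fun a ha => (hx a).1 (hle ha)
  exact h1.ne_top ((Ideal.eq_top_iff_one _).2 ((hx 1).2 (by simp [this])))

lemma TF.exists_regular [Module.Finite R N] (h : TF N I) : ∃ x ∈ I, ∀ u : N, x • u = 0 → u = 0 := by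
  obtain ⟨F, hF⟩ := finite_ass (R := R) N
  obtain ⟨j, hj, hj'⟩ := avoid F (fun P hP => ((hF P).1 hP).1) I 0
    (fun P hP hh => h.ass ((hF P).1 hP) hh.2)
  refine ⟨j, hj, fun u hu => ?_⟩
  by_contra hne
  obtain ⟨p, hp, hp'⟩ := exists_isAss (R := R) u hne
  exact hj' p ((hF p).2 hp) (by rw [zero_add]; exact hp' _ hu)

lemma pow_smul_tors {i : ℕ} {x : R} (hx : x ∈ I) (u : locH I i N) : ∃ n, x ^ n • u = 0 := by
  obtain ⟨n, hn⟩ := torsion I u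
  exact ⟨n, hn _ (Ideal.pow_mem_pow hx n)⟩

lemma subsing_of_inj {i : ℕ} {x : R} (hx : x ∈ I) (h : ∀ u : locH I i N, x • u = 0 → u = 0) :
    Subsingleton (locH I i N) := by
  refine subsingleton_of_forall_eq 0 fun u => ?_
  obtain ⟨n, hn⟩ := pow_smul_tors hx u
  induction n generalizing u with
  | zero => simpa using hn
  | succ n ih => exact ih u (h _ (by rw [smul_smul, ← pow_succ']; exact hn))

end

lemma bound [IsNoetherianRing R] (I : Ideal R) (l : List R) : ∀ (N : Type) [AddCommGroup N] [Module R N] [Module.Finite R N],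
    (∀ x ∈ l, x ∈ I) → I ≤ (Module.annihilator R N ⊔ Ideal.span {x | x ∈ l}).radical →
    ∀ i, l.length < i → Subsingleton (locH I i N) := by
  induction l with
  | nil =>
    intro N _ _ _ _ hr i hi
    simp only [List.not_mem_nil, Set.ofPred_false, Ideal.span_empty, sup_bot_eq] at hr
    obtain ⟨n, hn⟩ := Ideal.exists_pow_le_of_le_radical_of_fg hr (IsNoetherian.noetherian I)
    exact L2 I N n (fun a ha x => Module.mem_annihilator.1 (hn ha) x) i hi
  | cons y l ih =>
    intro N _ _ _ hl hr i hi
    simp only [List.length_cons] at hi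
    suffices hs : ∀ (N : Type) [AddCommGroup N] [Module R N] [Module.Finite R N], TF N I →
        I ≤ (Module.annihilator R N ⊔ Ideal.span {x | x ∈ y :: l}).radical →
        Subsingleton (locH I i N) by
      have := hs (N ⧸ Gam N I) quot_TF (hr.trans (Ideal.radical_mono (sup_le_sup_right
        (LinearMap.annihilator_le_of_surjective _ (Submodule.mkQ_surjective _)) _)))
      exact (quot_bij (N := N) (I := I) i (by lia)).1.subsingleton
    clear hr
    intro N _ _ _ hTF hr
    obtain ⟨F, hF⟩ := finite_ass (R := R) N
    set J := Ideal.span {x | x ∈ l} with hJ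
    have hspan : ∀ (b Q : Ideal R), b ≤ Q → J ≤ Q → y ∈ Q → b ⊔ Ideal.span {x | x ∈ y :: l} ≤ Q := by
      intro b Q hb hQ hy
      refine sup_le hb (Ideal.span_le.2 fun x hx => ?_)
      rcases List.mem_cons.1 hx with rfl | hx
      · exact hy
      · exact hQ (Ideal.subset_span hx)
    obtain ⟨j, hj, hj'⟩ := avoid F (fun P hP => ((hF P).1 hP).1) J y (by
      rintro P hP ⟨h1, h2⟩
      have hass := (hF P).1 hP
      refine hTF.ass hass (hr.trans ?_)
      rw [hass.1.radical_le_iff]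
      refine hspan _ _ (fun r hr => ?_) h2 h1
      obtain ⟨_, u, hu⟩ := hass
      exact (hu r).2 (Module.mem_annihilator.1 hr u))
    have hJI : J ≤ I := Ideal.span_le.2 fun x hx => hl x (List.mem_cons_of_mem _ hx)
    set z := y + j with hz
    have hzI : z ∈ I := I.add_mem (hl y List.mem_cons_self) (hJI hj)
    have hreg : ∀ u : N, z • u = 0 → u = 0 := by
      intro u hu
      by_contra hne
      obtain ⟨p, hp, hp'⟩ := exists_isAss (R := R) u hne
      exact hj' p ((hF p).2 hp) (hp' _ hu)
    have hS := SES.of_regular z hreg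
    obtain ⟨i, rfl⟩ : ∃ k, i = k + 1 := ⟨i - 1, by lia⟩
    have hq : Subsingleton (locH I i (N ⧸ LinearMap.range (LinearMap.lsmul R N z))) := by
      refine ih _ (fun x hx => hl x (List.mem_cons_of_mem _ hx)) (hr.trans (Ideal.radical_mono ?_)) i (by lia)
      refine hspan _ _ ((LinearMap.annihilator_le_of_surjective _ (Submodule.mkQ_surjective _)).trans le_sup_left) le_sup_right ?_
      have h1 : z ∈ Module.annihilator R (N ⧸ LinearMap.range (LinearMap.lsmul R N z)) := by
        rw [Module.mem_annihilator]
        intro u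
        obtain ⟨u, rfl⟩ := Submodule.Quotient.mk_surjective _ u
        rw [← Submodule.Quotient.mk_smul, Submodule.Quotient.mk_eq_zero]
        exact ⟨u, rfl⟩
      have h2 : y = z - j := by rw [hz]; ring
      rw [h2]
      exact Ideal.sub_mem _ (Ideal.mem_sup_left h1) (Ideal.mem_sup_right hj)
    refine subsing_of_inj hzI fun u hu => ?_
    rw [← Hm_lsmul] at hu
    obtain ⟨v, rfl⟩ := hS.ex1 I i u hu
    rw [Subsingleton.elim v 0, map_zero]

lemma exists_bound [IsNoetherianRing R] (I : Ideal R) : ∃ B, ∀ (N : Type) [AddCommGroup N] [Module R N]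
    [Module.Finite R N], ∀ i, B < i → Subsingleton (locH I i N) := by
  obtain ⟨s, hs⟩ := IsNoetherian.noetherian I
  refine ⟨s.toList.length, fun N _ _ _ i hi => bound I s.toList N ?_ ?_ i hi⟩
  · intro x hx
    rw [← hs]; exact Submodule.subset_span (by simpa using hx)
  · refine le_trans ?_ Ideal.le_radical
    refine le_trans ?_ le_sup_right
    have : {x | x ∈ s.toList} = (s : Set R) := by ext; simp
    rw [this, ← hs]

end LC

namespace LC

section B1

variable [IsNoetherianRing R]

lemma exists_hom (M : Type) [AddCommGroup M] [Module R M] [Module.Finite R M] (P : Ideal R) [hP : P.IsPrime]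
    (h : Module.annihilator R M ≤ P) : ∃ f : M →ₗ[R] R ⧸ P, ∃ m, f m ≠ 0 := by
  let Φ : Set (Submodule R M) := {L | ∀ d : R, (∀ x : M, d • x ∈ L) → d ∈ P}
  have h0 : (⊥ : Submodule R M) ∈ Φ := fun d hd => h (Module.mem_annihilator.2 fun x => (Submodule.mem_bot R).1 (hd x))
  obtain ⟨L, hL, hmax⟩ := (wellFounded_gt (α := Submodule R M)).has_min Φ ⟨⊥, h0⟩
  have hne : ∃ m, m ∉ L := by
    by_contra! hcon
    exact hP.ne_top ((Ideal.eq_top_iff_one _).2 (hL 1 fun x => hcon _))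
  obtain ⟨m, hm⟩ := hne
  have hL' : ¬ (L ⊔ Submodule.span R {m}) ∈ Φ := fun hh => hmax _ hh (by
    refine lt_of_le_of_ne le_sup_left fun heq => hm ?_
    rw [heq]
    exact Submodule.mem_sup_right (Submodule.mem_span_singleton_self m))
  simp only [Φ, Set.mem_setOf_eq, not_forall] at hL'
  obtain ⟨d, hd, hdP⟩ := hL'
  let φ : R →ₗ[R] M ⧸ L := LinearMap.toSpanSingleton R _ (L.mkQ m)
  let D : M →ₗ[R] M ⧸ L := d • L.mkQ
  have hD : ∀ x, D x ∈ LinearMap.range φ := by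
    intro x
    obtain ⟨l, hl, z, hz, he⟩ := Submodule.mem_sup.1 (hd x)
    obtain ⟨r, rfl⟩ := Submodule.mem_span_singleton.1 hz
    refine ⟨r, ?_⟩
    change r • L.mkQ m = d • L.mkQ x
    rw [← map_smul, ← map_smul, ← he, map_add, (Submodule.Quotient.mk_eq_zero L).2 hl |> (fun h => (h : L.mkQ l = 0)), zero_add]
  have hker : LinearMap.ker φ ≤ P := by
    intro r hr
    have hr' : r • m ∈ L := by
      rw [← Submodule.Quotient.mk_eq_zero, Submodule.Quotient.mk_smul]; exact hr
    have : r * d ∈ P := hL _ fun x => by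
      obtain ⟨l, hl, z, hz, he⟩ := Submodule.mem_sup.1 (hd x)
      obtain ⟨c, rfl⟩ := Submodule.mem_span_singleton.1 hz
      rw [mul_smul, ← he, smul_add, smul_comm r c]
      exact L.add_mem (L.smul_mem _ hl) (L.smul_mem _ hr')
    exact (hP.mem_or_mem this).resolve_right hdP
  let f : M →ₗ[R] R ⧸ P := Submodule.factor hker ∘ₗ φ.quotKerEquivRange.symm.toLinearMap ∘ₗ D.codRestrict _ hD
  refine ⟨f, m, ?_⟩
  have : φ.quotKerEquivRange.symm (D.codRestrict _ hD m) = Submodule.Quotient.mk d := by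
    rw [LinearEquiv.symm_apply_eq]
    apply Subtype.ext
    rfl
  have hf : f m = Submodule.Quotient.mk d := by
    change Submodule.factor hker (φ.quotKerEquivRange.symm (D.codRestrict _ hD m)) = _
    rw [this]; rfl
  rw [hf]
  intro hh
  exact hdP ((Submodule.Quotient.mk_eq_zero P).1 hh)

variable {S : Submonoid R} {I : Ideal R}

lemma nul_equiv {A B : Type} [AddCommGroup A] [Module R A] [AddCommGroup B] [Module R B] {i : ℕ}
    (e : A ≃ₗ[R] B) (h : Nul S (locH I i B)) : Nul S (locH I i A) :=
  Nul.of_inj (Hm_equiv i e).1 h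

lemma filt (b : Ideal R) (i : ℕ)
    (h : ∀ P : Ideal R, P.IsPrime → b ≤ P → Nul S (locH I i (R ⧸ P)))
    (N : Type) [AddCommGroup N] [Module R N] [hN : Module.Finite R N]
    (hb : b ≤ Module.annihilator R N) : Nul S (locH I i N) := by
  revert hb
  refine IsNoetherianRing.induction_on_isQuotientEquivQuotientPrime R hN
    (motive := fun N _ _ _ => b ≤ Module.annihilator R N → Nul S (locH I i N)) ?_ ?_ ?_
  · intro N _ _ _ _ _
    have : Subsingleton (locH I i N) := subsingleton_of_forall_eq 0 fun u => by
      have := smul_eq_zero_of i (1 : R) (fun u : N => Subsingleton.elim _ _) u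
      simpa using this
    exact Nul.of_subsingleton
  · intro N _ _ _ p e hb
    refine nul_equiv e (h _ p.2 ?_)
    rw [e.annihilator_eq, Ideal.annihilator_quotient] at hb
    exact hb
  · intro A _ _ _ B _ _ _ C _ _ _ f g hf hg he hA hC hb
    have hS : SES f g := ⟨hf, he, hg⟩
    exact hS.nul2 i (hA (hb.trans (LinearMap.annihilator_le_of_injective f hf)))
      (hC (hb.trans (LinearMap.annihilator_le_of_surjective g hg)))

lemma B1 (M : Type) [AddCommGroup M] [Module R M] [Module.Finite R M] (c : ℕ)
    (h : ∀ i, c ≤ i → Nul S (locH I i M)) (i : ℕ) (hi : c ≤ i) (P : Ideal R) (hP : P.IsPrime)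
    (hle : Module.annihilator R M ≤ P) : Nul S (locH I i (R ⧸ P)) := by
  obtain ⟨B, hB⟩ := exists_bound I
  induction hk : B + 1 - i generalizing i P with
  | zero =>
    have := hB (R ⧸ P) i (by lia)
    exact Nul.of_subsingleton
  | succ k ih =>
    have ih' : ∀ (N : Type) [AddCommGroup N] [Module R N] [Module.Finite R N],
        Module.annihilator R M ≤ Module.annihilator R N → Nul S (locH I (i+1) N) := fun N _ _ _ hN =>
      filt _ (i+1) (fun P hP hle => ih (i+1) (by lia) P hP hle (by lia)) N hN
    clear ih
    by_contra hcon
    let Φ : Set (Ideal R) := {Q | Q.IsPrime ∧ Module.annihilator R M ≤ Q ∧ ¬ Nul S (locH I i (R ⧸ Q))}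
    obtain ⟨Q, ⟨hQ, hMQ, hQn⟩, hmax⟩ := (wellFounded_gt (α := Ideal R)).has_min Φ ⟨P, hP, hle, hcon⟩
    apply hQn
    obtain ⟨f, m, hm⟩ := exists_hom M Q hMQ
    have hS1 := SES.of_surj f.rangeRestrict f.surjective_rangeRestrict
    have hS2 := SES.of_submodule (LinearMap.range f)
    have n1 : Nul S (locH I i (LinearMap.range f)) := hS1.nul3 i (h i hi)
      (ih' _ (LinearMap.annihilator_le_of_injective _ (Submodule.subtype_injective _)))
    refine hS2.nul2 i n1 ?_
    obtain ⟨d, hd⟩ := Submodule.Quotient.mk_surjective Q (f m)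
    refine filt (Module.annihilator R ((R ⧸ Q) ⧸ LinearMap.range f)) i (fun P' hP' hle' => ?_) _ le_rfl
    by_contra hP'n
    have hQP : Q ≤ P' := by
      refine le_trans ?_ hle'
      conv_lhs => rw [← Ideal.annihilator_quotient (I := Q)]
      exact LinearMap.annihilator_le_of_surjective _ (Submodule.mkQ_surjective _)
    refine hmax P' ⟨hP', hMQ.trans hQP, hP'n⟩ (lt_of_le_of_ne hQP ?_)
    rintro rfl
    have hdQ : d ∈ Q := by
      apply hle'
      rw [Module.mem_annihilator]
      intro u
      obtain ⟨u, rfl⟩ := Submodule.Quotient.mk_surjective _ u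
      obtain ⟨r, rfl⟩ := Submodule.Quotient.mk_surjective _ u
      rw [← Submodule.Quotient.mk_smul, Submodule.Quotient.mk_eq_zero]
      refine ⟨r • m, ?_⟩
      rw [map_smul, ← hd, ← Submodule.Quotient.mk_smul, ← Submodule.Quotient.mk_smul, smul_eq_mul, smul_eq_mul, mul_comm]
    exact hm (by rw [← hd]; exact (Submodule.Quotient.mk_eq_zero Q).2 hdQ)

end B1

end LC

namespace LC

section A0

variable [IsNoetherianRing R]

lemma loc_rad {J P : Ideal R} (hP : P ∈ J.minimalPrimes) (a : Ideal R) (ha : a ≤ P) :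
    ∃ t ∉ P, ∃ e : ℕ, ∀ y ∈ a ^ e, t * y ∈ J := by
  classical
  have hprime : P.IsPrime := hP.1.1
  have key : ∃ t ∉ P, a ≤ (J.colon {t}).radical := by
    obtain ⟨s, hs⟩ := IsNoetherian.noetherian a
    have h1 : ∀ y ∈ s, ∃ t ∉ P, y ∈ (J.colon {t}).radical := by
      intro y hy
      have hyP : y ∈ P := ha (by rw [← hs]; exact Submodule.subset_span hy)
      by_contra! hcon
      have hdisj : Disjoint (J : Set R) (P.primeCompl ⊔ Submonoid.powers y : Submonoid R) := by
        rw [Set.disjoint_left]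
        intro r hr hr'
        obtain ⟨t, ht, z, ⟨n, rfl⟩, rfl⟩ := Submonoid.mem_sup.1 hr'
        refine hcon t ht ⟨n, ?_⟩
        rw [Submodule.mem_colon_singleton, smul_eq_mul, mul_comm]
        exact hr
      obtain ⟨Q, hQ, hJQ, hd⟩ := Ideal.exists_le_prime_disjoint J _ hdisj
      rw [Set.disjoint_left] at hd
      have hQP : Q ≤ P := by
        intro r hr
        by_contra hrP
        exact hd hr ((le_sup_left : P.primeCompl ≤ P.primeCompl ⊔ Submonoid.powers y) hrP)
      have hPQ : P ≤ Q := hP.2 ⟨hQ, hJQ⟩ hQP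
      exact hd (hPQ hyP) ((le_sup_right : Submonoid.powers y ≤ P.primeCompl ⊔ Submonoid.powers y)
        (Submonoid.mem_powers y))
    choose! t ht ht' using h1
    refine ⟨∏ y ∈ s, t y, ?_, ?_⟩
    · rw [hprime.prod_mem_iff]
      rintro ⟨y, hy, h⟩
      exact ht y hy h
    · conv_lhs => rw [← hs]
      refine Submodule.span_le.2 fun y hy => ?_
      refine Ideal.radical_mono ?_ (ht' y hy)
      intro r hr
      rw [Submodule.mem_colon_singleton] at hr ⊢
      rw [← Finset.prod_erase_mul s t hy, smul_eq_mul, mul_left_comm]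
      exact J.mul_mem_left _ hr
  obtain ⟨t, ht, h⟩ := key
  obtain ⟨e, he⟩ := Ideal.exists_pow_le_of_le_radical_of_fg h (IsNoetherian.noetherian a)
  refine ⟨t, ht, e, fun y hy => ?_⟩
  have := he hy
  rw [Submodule.mem_colon_singleton, smul_eq_mul] at this
  rwa [mul_comm]

lemma krull (M : Type) [AddCommGroup M] [Module R M] [Module.Finite R M] (P : Ideal R) [P.IsPrime]
    (x : R) (hx : x ∈ P) (z : M) (h : ∀ k : ℕ, ∃ s ∉ P, ∃ v : M, s • z = x ^ k • v) :
    ∃ w ∉ P, w • z = 0 := by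
  let A := Localization.AtPrime P
  let f := LocalizedModule.mkLinearMap P.primeCompl M
  let J : Ideal A := Ideal.span {algebraMap R A x}
  have hJ : J ≠ ⊤ := by
    intro htop
    rw [Ideal.span_singleton_eq_top] at htop
    exact (IsLocalization.AtPrime.isUnit_to_map_iff A P x).1 htop hx
  have h0 : f z ∈ (⨅ i : ℕ, J ^ i • ⊤ : Submodule A (LocalizedModule P.primeCompl M)) := by
    rw [Submodule.mem_iInf]
    intro k
    obtain ⟨s, hs, v, hv⟩ := h k
    have h1 : algebraMap R A s • f z = algebraMap R A (x ^ k) • f v := by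
      rw [algebraMap_smul, algebraMap_smul, ← map_smul, ← map_smul, hv]
    have h2 : algebraMap R A (x ^ k) • f v ∈ (J ^ k • ⊤ : Submodule A (LocalizedModule P.primeCompl M)) := by
      refine Submodule.smul_mem_smul ?_ trivial
      rw [map_pow]
      exact Ideal.pow_mem_pow (Ideal.mem_span_singleton_self _) k
    rw [← h1] at h2
    have hu : IsUnit (algebraMap R A s) := (IsLocalization.AtPrime.isUnit_to_map_iff A P s).2 hs
    exact (Submodule.smul_mem_iff_of_isUnit _ hu).1 h2
  rw [Ideal.iInf_pow_smul_eq_bot_of_isLocalRing J hJ, Submodule.mem_bot] at h0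
  obtain ⟨w, hw⟩ := (IsLocalizedModule.eq_zero_iff P.primeCompl f).1 h0
  exact ⟨w, w.2, hw⟩

lemma IsAss.of_inj {p : Ideal R} {A B : Type} [AddCommGroup A] [Module R A] [AddCommGroup B] [Module R B]
    (h : IsAss p A) (f : A →ₗ[R] B) (hf : Function.Injective f) : IsAss p B := by
  obtain ⟨h1, x, hx⟩ := h
  refine ⟨h1, f x, fun r => ?_⟩
  rw [hx, ← map_smul, map_eq_zero_iff f hf]

lemma assMod (M : Type) [AddCommGroup M] [Module R M] [Module.Finite R M] {p P : Ideal R}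
    (hp : IsAss p M) (x : R) (hx : ∀ u : M, x • u = 0 → u = 0)
    (hP : P ∈ (p ⊔ Ideal.span {x}).minimalPrimes) :
    IsAss P (M ⧸ LinearMap.range (LinearMap.lsmul R M x)) := by
  have hPp : P.IsPrime := hP.1.1
  let N : Submodule R M := Submodule.torsionBySet R M p
  have hN : ∀ m, m ∈ N ↔ ∀ r ∈ p, r • m = 0 := fun m => by
    rw [Submodule.mem_torsionBySet_iff]; simp
  let V : Submodule R N := Ideal.span {x} • ⊤
  have hV : ∀ n : N, n ∈ V ↔ ∃ n', n = x • n' := fun n => by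
    simp only [V, Submodule.ideal_span_singleton_smul, Submodule.mem_smul_pointwise_iff_exists]
    simp [eq_comm]
  have hle : V ≤ (LinearMap.range (LinearMap.lsmul R M x)).comap N.subtype := by
    intro n hn
    obtain ⟨n', rfl⟩ := (hV n).1 hn
    exact ⟨n', rfl⟩
  have hann : Module.annihilator R N = p := by
    obtain ⟨_, m, hm⟩ := hp
    apply le_antisymm
    · intro r hr
      rw [hm]
      exact congrArg Subtype.val (Module.mem_annihilator.1 hr ⟨m, (hN m).2 fun s hs => (hm s).1 hs⟩)
    · intro r hr
      rw [Module.mem_annihilator]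
      exact fun n => Subtype.ext ((hN n).1 n.2 r hr)
  have hsupp : ∀ Q : Ideal R, Q.IsPrime → (Module.annihilator R (N ⧸ V) ≤ Q ↔ p ⊔ Ideal.span {x} ≤ Q) := by
    intro Q hQ
    have := Module.support_quotient (R := R) (M := N) (Ideal.span {x})
    rw [Module.support_eq_zeroLocus, Module.support_eq_zeroLocus, hann] at this
    have := congrArg (fun s => (⟨Q, hQ⟩ : PrimeSpectrum R) ∈ s) this
    simp only [PrimeSpectrum.mem_zeroLocus, Set.mem_inter_iff, SetLike.coe_subset_coe, eq_iff_iff] at this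
    rw [sup_le_iff]
    exact this
  have hPV : P ∈ (Module.annihilator R (N ⧸ V)).minimalPrimes := by
    refine ⟨⟨hPp, (hsupp P hPp).2 hP.1.2⟩, fun Q hQ hQP => hP.2 ⟨hQ.1, (hsupp Q hQ.1).1 hQ.2⟩ hQP⟩
  have h1 : IsAss P (N ⧸ V) :=
    (isAss_iff _ _).2 (Module.associatedPrimes.minimalPrimes_annihilator_subset_associatedPrimes R (N ⧸ V) hPV)
  refine h1.of_inj (Submodule.mapQ _ _ N.subtype hle) ?_
  rw [injective_iff_map_eq_zero]
  intro u hu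
  obtain ⟨n, rfl⟩ := Submodule.Quotient.mk_surjective _ u
  rw [Submodule.mapQ_apply, Submodule.Quotient.mk_eq_zero] at hu
  obtain ⟨m, hm⟩ := hu
  have hm' : x • m = n := hm
  rw [Submodule.Quotient.mk_eq_zero, hV]
  refine ⟨⟨m, (hN m).2 fun r hr => hx _ ?_⟩, Subtype.ext hm'.symm⟩
  rw [smul_comm, hm']
  exact (hN n).1 n.2 r hr

end A0

end LC

namespace LC

section A0

variable [IsNoetherianRing R] {I : Ideal R}

lemma A0_contra (M : Type) [AddCommGroup M] [Module R M] [Module.Finite R M] (hTF : TF M I)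
    {p P q : Ideal R} [hPp : P.IsPrime] [q.IsPrime] (hp : IsAss p M) (x : R)
    (hx : ∀ u : M, x • u = 0 → u = 0) (hP : P ∈ (p ⊔ Ideal.span {x}).minimalPrimes)
    (hPq : P ≤ q) (hIP : I ≤ P) (hCC : CC q.primeCompl I (locH I 1 M)) : False := by
  have hIp := hTF.ass hp
  have hH0 := hTF.H0
  obtain ⟨n, hn⟩ := hCC
  obtain ⟨hpp, m, hm⟩ := hp
  have hpP : p ≤ P := le_sup_left.trans hP.1.2
  have hxP : x ∈ P := hP.1.2 (Ideal.mem_sup_right (Ideal.mem_span_singleton_self x))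
  refine hIp (hpp.pow_le_iff (n := n + 1) (by simp) |>.1 ((Ideal.pow_le_pow_right (by lia : n ≤ n + 1)).trans ?_))
  intro y hy
  have key : ∃ w ∉ P, w • (y • m) = 0 := by
    refine krull M P x hxP _ fun k => ?_
    have hPk : P ∈ (p ⊔ Ideal.span {x ^ (k+1)}).minimalPrimes := by
      refine ⟨⟨hPp, sup_le hpP ?_⟩, fun Q hQ hQP => hP.2 ⟨hQ.1, sup_le (le_sup_left.trans hQ.2) ?_⟩ hQP⟩
      · rw [Ideal.span_singleton_le_iff_mem]; exact P.pow_mem_of_mem hxP _ (by lia)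
      · rw [Ideal.span_singleton_le_iff_mem]
        exact hQ.1.mem_of_pow_mem _ (hQ.2 (Ideal.mem_sup_right (Ideal.mem_span_singleton_self _)))
    obtain ⟨t, ht, e, he⟩ := loc_rad hPk I hIP
    have hreg : ∀ u : M, x ^ (k+1) • u = 0 → u = 0 := by
      generalize k + 1 = j
      induction j with
      | zero => intro u hu; simpa using hu
      | succ j ih => intro u hu; rw [pow_succ, mul_smul] at hu; exact hx _ (ih _ hu)
    have hS := SES.of_regular (x ^ (k+1)) hreg
    set W := LinearMap.range (LinearMap.lsmul R M (x ^ (k+1)))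
    obtain ⟨h0, hh0⟩ := gam_range I (M ⧸ W) (W.mkQ (t • m)) e (by
      intro a ha
      rw [← map_smul]
      refine (Submodule.Quotient.mk_eq_zero W).2 ?_
      obtain ⟨b, hb, c, hc, hbc⟩ := Submodule.mem_sup.1 (he a ha)
      obtain ⟨r, rfl⟩ := Ideal.mem_span_singleton'.1 hc
      refine ⟨r • m, ?_⟩
      rw [smul_smul, mul_comm a t, ← hbc, add_smul, (hm b).1 hb, zero_add]
      rw [LinearMap.lsmul_apply, smul_smul, mul_comm])
    obtain ⟨s, hs, h1⟩ := hn (hS.delta I 0 h0) hy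
    rw [← map_smul, ← map_smul] at h1
    obtain ⟨w, hw⟩ := hS.ex3 I 0 _ h1
    rw [Subsingleton.elim w 0, map_zero] at hw
    have h2 := congrArg (gam I (M ⧸ W)) hw
    rw [map_zero, map_smul, map_smul, hh0, ← map_smul, ← map_smul] at h2
    obtain ⟨v, hv⟩ := (Submodule.Quotient.mk_eq_zero W).1 h2.symm
    refine ⟨s * t, fun h => ?_, x • v, ?_⟩
    · rcases hPp.mem_or_mem h with h | h
      · exact hs (hPq h)
      · exact ht h
    · rw [smul_smul (x ^ k), ← pow_succ]
      refine Eq.trans ?_ hv.symm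
      rw [mul_smul, smul_comm t y]
  obtain ⟨w, hw, h⟩ := key
  rw [smul_smul, ← hm] at h
  exact (hpp.mem_or_mem h).resolve_left fun h => hw (hpP h)

/-- there is a chain of primes of length at least `c` from `p` to `q` -/
def Chn (c : ℕ) (p q : PrimeSpectrum R) : Prop :=
  ∃ l : LTSeries (PrimeSpectrum R), l.head = p ∧ l.last = q ∧ c ≤ l.length

lemma Chn.cons {c : ℕ} {p P q : PrimeSpectrum R} (h : Chn c P q) (hlt : p < P) : Chn (c+1) p q := by
  obtain ⟨l, h1, h2, h3⟩ := h
  refine ⟨l.cons p (by rw [h1]; exact hlt), by simp, by simpa using h2, ?_⟩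
  have : (l.cons p (by rw [h1]; exact hlt)).length = l.length + 1 := by
    change 0 + l.length + 1 = _
    rw [zero_add]
  lia

lemma Chn.refl (p : PrimeSpectrum R) : Chn 0 p p := ⟨RelSeries.singleton _ p, rfl, rfl, by simp⟩

lemma Chn.mono {c d : ℕ} (hcd : d ≤ c) {p q : PrimeSpectrum R} (h : Chn c p q) : Chn d p q := by
  obtain ⟨l, h1, h2, h3⟩ := h
  exact ⟨l, h1, h2, by lia⟩

lemma CC_quot (M : Type) [AddCommGroup M] [Module R M] [Module.Finite R M] {S : Submonoid R} (i : ℕ)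
    (h : CC S I (locH I i M)) : CC S I (locH I i (M ⧸ Gam M I)) := by
  by_cases hi : i = 0
  · subst hi
    have := (quot_TF (N := M) (I := I)).H0
    exact CC.of_subsingleton
  · exact CC.of_surj (quot_bij (N := M) (I := I) i (by lia)).2 h

lemma IsAss.quot {M : Type} [AddCommGroup M] [Module R M] [Module.Finite R M] {p : Ideal R}
    (hp : IsAss p M) (hI : ¬ I ≤ p) : IsAss p (M ⧸ Gam M I) := by
  obtain ⟨hpp, m, hm⟩ := hp
  refine ⟨hpp, (Gam M I).mkQ m, fun r => ?_⟩
  rw [← map_smul]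
  refine Iff.trans ?_ (Submodule.Quotient.mk_eq_zero (Gam M I)).symm
  constructor
  · intro hr
    rw [(hm r).1 hr]
    exact zero_mem _
  · rintro ⟨n, hn⟩
    obtain ⟨a, ha, hap⟩ := SetLike.not_le_iff_exists.1 hI
    have := hn _ (Ideal.pow_mem_pow ha n)
    rw [smul_smul, ← hm] at this
    exact (hpp.mem_or_mem this).resolve_left fun h => hap (hpp.mem_of_pow_mem _ h)

lemma A0 (c : ℕ) : ∀ (M : Type) [AddCommGroup M] [Module R M] [Module.Finite R M]
    (p q : PrimeSpectrum R), IsAss p.asIdeal M → ¬ I ≤ p.asIdeal → I ≤ q.asIdeal → p ≤ q →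
    (∀ i < c, CC q.asIdeal.primeCompl I (locH I i M)) → Chn c p q := by
  induction c with
  | zero =>
    intro M _ _ _ p q _ hIp hIq hpq _
    have hlt : p < q := lt_of_le_of_ne hpq fun h => hIp (h ▸ hIq)
    exact ((Chn.refl q).cons hlt).mono (by lia)
  | succ c ih =>
    intro M _ _ _ p q hp hIp hIq hpq hCC
    have hlt : p < q := lt_of_le_of_ne hpq fun h => hIp (h ▸ hIq)
    by_cases hc : c = 0
    · subst hc
      exact (Chn.refl q).cons hlt
    suffices key : ∀ (M : Type) [AddCommGroup M] [Module R M] [Module.Finite R M],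
        IsAss p.asIdeal M → TF M I → (∀ i < c + 1, CC q.asIdeal.primeCompl I (locH I i M)) → Chn (c+1) p q from
      key _ (hp.quot hIp) quot_TF fun i hi => CC_quot M i (hCC i hi)
    clear hCC hp
    intro M _ _ _ hp hTF hCC
    obtain ⟨x, hxI, hx⟩ := hTF.exists_regular
    have hle : p.asIdeal ⊔ Ideal.span {x} ≤ q.asIdeal :=
      sup_le hpq ((Ideal.span_singleton_le_iff_mem _).2 (hIq hxI))
    obtain ⟨P, hP, hPq⟩ := Ideal.exists_minimalPrimes_le hle
    have hPp : P.IsPrime := hP.1.1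
    have hxP : x ∈ P := hP.1.2 (Ideal.mem_sup_right (Ideal.mem_span_singleton_self x))
    have hxp : x ∉ p.asIdeal := by
      intro h
      obtain ⟨hpp, m, hm⟩ := hp
      have := hx m ((hm x).1 h)
      exact hpp.ne_top ((Ideal.eq_top_iff_one _).2 ((hm 1).2 (by simp [this])))
    by_cases hIP : I ≤ P
    · exact (A0_contra M hTF hp x hx hP hPq hIP (hCC 1 (by lia))).elim
    · have hlt' : p < ⟨P, hPp⟩ := lt_of_le_of_ne (le_sup_left.trans hP.1.2 : p.asIdeal ≤ P) fun h => by
        rw [h] at hxp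
        exact hxp hxP
      exact (ih _ ⟨P, hPp⟩ q (assMod M hp x hx hP) hIP hIq hPq fun i hi =>
        (SES.of_regular x hx).cc3 i (hCC i (by lia)) (hCC (i+1) (by lia))).cons hlt'

end A0

end LC

namespace LC

section ExtStep

lemma ext_step {A : Type} [CommRing A] {N C : Type} [AddCommGroup N] [Module A N]
    [AddCommGroup C] [Module A C] (J : Ideal A) (y : A) (hy : y ∈ J)
    {g : N →ₗ[A] C} (h : SES (LinearMap.lsmul A N y) g) (d : ℕ)
    (hd : Nontrivial (extH J (d+1) N)) : Nontrivial (extH J d C) := by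
  let X : ModuleCat.{0} A := ModuleCat.of A (A ⧸ J)
  have e1 := extEquiv X (ModuleCat.of A N) (d+1)
  have e2 := extEquiv X (ModuleCat.of A C) d
  have h1 : Nontrivial (Abelian.Ext X (ModuleCat.of A N) (d+1)) :=
    e1.toEquiv.nontrivial_congr.2 hd
  refine e2.toEquiv.nontrivial_congr.1 ?_
  obtain ⟨x, hx⟩ := exists_ne (0 : Abelian.Ext X (ModuleCat.of A N) (d+1))
  have hyx : y • x = 0 := by
    have h1 : y • x = (Abelian.Ext.mk₀ (y • 𝟙 X)).comp x (zero_add _) := by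
      rw [Abelian.Ext.mk₀_smul, Abelian.Ext.smul_comp, Abelian.Ext.mk₀_id_comp]
    have h2 : y • 𝟙 X = 0 := by
      refine ModuleCat.hom_ext (LinearMap.ext fun x => ?_)
      obtain ⟨r, rfl⟩ := Submodule.Quotient.mk_surjective _ x
      change y • (Submodule.Quotient.mk r : A ⧸ J) = 0
      rw [← Submodule.Quotient.mk_smul, Submodule.Quotient.mk_eq_zero]
      exact Ideal.mul_mem_right _ _ hy
    rw [h1, h2, Abelian.Ext.mk₀_zero, Abelian.Ext.zero_comp]
  obtain ⟨z, hz⟩ := h.ext1 x rfl (by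
    rw [Abelian.Ext.smul_eq_comp_mk₀] at hyx
    exact hyx)
  refine ⟨z, 0, fun h0 => hx ?_⟩
  rw [← hz, h0, Abelian.Ext.zero_comp]

lemma ext_zero_iff {A : Type} [CommRing A] {N : Type} [AddCommGroup N] [Module A N] (J : Ideal A) :
    Nontrivial (extH J 0 N) ↔ ∃ u : N, u ≠ 0 ∧ ∀ a ∈ J, a • u = 0 := by
  let X : ModuleCat.{0} A := ModuleCat.of A (A ⧸ J)
  have e1 := extEquiv X (ModuleCat.of A N) 0
  refine e1.toEquiv.nontrivial_congr.symm.trans ?_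
  constructor
  · intro h
    obtain ⟨x, hx⟩ := exists_ne (0 : Abelian.Ext X (ModuleCat.of A N) 0)
    obtain ⟨f, rfl⟩ := Abelian.Ext.mk₀_bijective _ _ |>.2 x
    refine ⟨f.hom (Submodule.Quotient.mk (1:A) : A ⧸ J), fun h0 => hx ?_, fun a ha => ?_⟩
    · have : f = 0 := by
        refine ModuleCat.hom_ext (LinearMap.ext fun x => ?_)
        obtain ⟨r, rfl⟩ := Submodule.Quotient.mk_surjective _ x
        have h3 : (Submodule.Quotient.mk r : A ⧸ J) = r • Submodule.Quotient.mk 1 := by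
          rw [← Submodule.Quotient.mk_smul]; simp
        exact (congrArg f.hom h3).trans ((map_smul f.hom r _).trans ((congrArg (r • ·) h0).trans (smul_zero r)))
      rw [this, Abelian.Ext.mk₀_zero]
    · have h3 : a • (Submodule.Quotient.mk (1:A) : A ⧸ J) = 0 := by
        rw [← Submodule.Quotient.mk_smul, Submodule.Quotient.mk_eq_zero]; simpa using ha
      exact (map_smul f.hom a _).symm.trans ((congrArg f.hom h3).trans (map_zero f.hom))
  · rintro ⟨u, hu, h⟩
    let f : (A ⧸ J) →ₗ[A] N := Submodule.liftQ _ (LinearMap.toSpanSingleton A N u) (fun a ha => h a ha)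
    refine ⟨Abelian.Ext.mk₀ (ModuleCat.ofHom f), 0, fun h0 => hu ?_⟩
    rw [← Abelian.Ext.mk₀_zero] at h0
    have h1 := Abelian.Ext.mk₀_bijective _ _ |>.1 h0
    have h2 : f = 0 := congrArg ModuleCat.Hom.hom h1
    have h3 : f (Submodule.Quotient.mk (1:A)) = (1:A) • u := rfl
    rw [h2, one_smul] at h3
    exact h3.symm

variable {M : Type} [AddCommGroup M] [Module R M]

lemma loc_ass_zero (p : Ideal R) [p.IsPrime] (hp : IsAss p M) :
    Nontrivial (extH (IsLocalRing.maximalIdeal (Localization.AtPrime p)) 0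
      (LocalizedModule p.primeCompl M)) := by
  rw [ext_zero_iff]
  obtain ⟨hpp, m, hm⟩ := hp
  refine ⟨LocalizedModule.mkLinearMap p.primeCompl M m, fun h => ?_, fun a ha => ?_⟩
  · rw [IsLocalizedModule.eq_zero_iff p.primeCompl] at h
    obtain ⟨c, hc⟩ := h
    exact c.2 ((hm c).2 hc)
  · rw [← Localization.AtPrime.map_eq_maximalIdeal] at ha
    refine Submodule.span_induction ?_ ?_ ?_ ?_ ha
    · rintro _ ⟨r, hr, rfl⟩
      rw [algebraMap_smul, ← map_smul, (hm r).1 hr, map_zero]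
    · simp
    · intro x y _ _ h1 h2; rw [add_smul, h1, h2, add_zero]
    · intro x y _ h; rw [smul_assoc, h, smul_zero]

end ExtStep

section A

variable [IsNoetherianRing R] {I : Ideal R}
variable {M : Type} [AddCommGroup M] [Module R M]

lemma unifS (S : Submonoid R) (N : Submodule R M) (hN : N.FG)
    (h : ∀ x ∈ N, ∃ s ∈ S, ∃ n : ℕ, ∀ a ∈ I ^ n, (s * a) • x = 0) :
    ∃ s ∈ S, ∃ n : ℕ, ∀ x ∈ N, ∀ a ∈ I ^ n, (s * a) • x = 0 := by
  revert h
  refine Submodule.fg_induction (motive := fun N _ =>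
    (∀ x ∈ N, ∃ s ∈ S, ∃ n : ℕ, ∀ a ∈ I ^ n, (s * a) • x = 0) →
    ∃ s ∈ S, ∃ n : ℕ, ∀ x ∈ N, ∀ a ∈ I ^ n, (s * a) • x = 0) ?_ ?_ N hN
  · intro x h
    obtain ⟨s, hs, n, hn⟩ := h x (Submodule.mem_span_singleton_self x)
    refine ⟨s, hs, n, fun y hy a ha => ?_⟩
    obtain ⟨r, rfl⟩ := Submodule.mem_span_singleton.1 hy
    rw [smul_comm, hn a ha, smul_zero]
  · intro N₁ N₂ _ _ h1 h2 h
    obtain ⟨s, hs, n, hn⟩ := h1 fun x hx => h x (Submodule.mem_sup_left hx)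
    obtain ⟨t, ht, k, hk⟩ := h2 fun x hx => h x (Submodule.mem_sup_right hx)
    refine ⟨s * t, S.mul_mem hs ht, n + k, fun x hx a ha => ?_⟩
    obtain ⟨y, hy, z, hz, rfl⟩ := Submodule.mem_sup.1 hx
    have e1 : s * t * a = t * (s * a) := by ring
    have e2 : s * t * a = s * (t * a) := by ring
    rw [smul_add, e1, mul_smul, hn y hy a (Ideal.pow_le_pow_right (by lia) ha), ← e1, e2, mul_smul,
      hk z hz a (Ideal.pow_le_pow_right (by lia) ha)]
    simp

/-- the submodule of elements killed by `s I^n` -/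
def GamS (M : Type) [AddCommGroup M] [Module R M] (S : Submonoid R) (I : Ideal R) : Submodule R M where
  carrier := {x | ∃ s ∈ S, ∃ n : ℕ, ∀ a ∈ I ^ n, (s * a) • x = 0}
  zero_mem' := ⟨1, S.one_mem, 0, by simp⟩
  add_mem' := by
    rintro x y ⟨s, hs, n, hn⟩ ⟨t, ht, k, hk⟩
    refine ⟨s * t, S.mul_mem hs ht, n + k, fun a ha => ?_⟩
    have e1 : s * t * a = t * (s * a) := by ring
    have e2 : s * t * a = s * (t * a) := by ring
    rw [smul_add, e1, mul_smul, hn a (Ideal.pow_le_pow_right (by lia) ha), ← e1, e2, mul_smul,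
      hk a (Ideal.pow_le_pow_right (by lia) ha)]
    simp
  smul_mem' := by
    rintro r x ⟨s, hs, n, hn⟩
    exact ⟨s, hs, n, fun a ha => by rw [smul_comm, hn a ha, smul_zero]⟩

lemma kill_of_ass [Module.Finite R M] (q : Ideal R) [hq : q.IsPrime]
    (h : ∀ P, IsAss P M → P ≤ q → I ≤ P) :
    ∃ s ∈ q.primeCompl, ∃ n : ℕ, ∀ x : M, ∀ a ∈ I ^ n, (s * a) • x = 0 := by
  have hN : IsNoetherian R M := inferInstance
  suffices hT : ∀ x : M, x ∈ GamS M q.primeCompl I by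
    obtain ⟨s, hs, n, hn⟩ := unifS (I := I) q.primeCompl (⊤ : Submodule R M) (IsNoetherian.noetherian _) (fun x _ => hT x)
    exact ⟨s, hs, n, fun x => hn x trivial⟩
  by_contra! hx
  obtain ⟨x0, hx0⟩ := hx
  set L := GamS M q.primeCompl I with hL
  have hne : L.mkQ x0 ≠ 0 := fun h0 => hx0 ((Submodule.Quotient.mk_eq_zero L).1 h0)
  obtain ⟨P, ⟨hPp, k', hk'⟩, -⟩ := exists_isAss (R := R) _ hne
  obtain ⟨k, rfl⟩ := L.mkQ_surjective k'
  have hk : ∀ r, r ∈ P ↔ r • k ∈ L := fun r =>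
    (hk' r).trans (by rw [← map_smul]; exact Submodule.Quotient.mk_eq_zero L)
  have hkL : k ∉ L := fun h => hPp.ne_top ((Ideal.eq_top_iff_one _).2 ((hk 1).2 (by simpa using h)))
  have hPq : P ≤ q := by
    intro r hr
    by_contra hrq
    obtain ⟨s, hs, n, hn⟩ := (hk r).1 hr
    exact hkL ⟨s * r, q.primeCompl.mul_mem hs hrq, n, fun a ha => by
      rw [mul_right_comm, mul_smul]; exact hn a ha⟩
  have hIP : ¬ I ≤ P := by
    intro hIP
    obtain ⟨s, hs, n, hn⟩ := unifS (I := I) q.primeCompl (Submodule.map (LinearMap.toSpanSingleton R M k) I) (IsNoetherian.noetherian _)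
      (by rintro _ ⟨r, hr, rfl⟩; exact (hk r).1 (hIP hr))
    refine hkL ⟨s, hs, n + 1, fun a ha => ?_⟩
    rw [pow_succ] at ha
    refine Submodule.mul_induction_on ha (fun b hb c hc => ?_) (fun b c hb hc => ?_)
    · have := hn (c • k) ⟨c, hc, rfl⟩ b hb
      rw [smul_smul] at this
      rwa [mul_assoc] at this
    · rw [mul_add, add_smul, hb, hc, add_zero]
  obtain ⟨s, hs, n, hn⟩ := unifS (I := I) q.primeCompl (Submodule.map (LinearMap.toSpanSingleton R M k) P) (IsNoetherian.noetherian _)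
      (by rintro _ ⟨r, hr, rfl⟩; exact (hk r).1 hr)
  obtain ⟨a, ha, haP⟩ := SetLike.not_le_iff_exists.1 hIP
  refine hIP (h P ⟨hPp, (s * a ^ n) • k, fun r => ⟨fun hr => ?_, fun hr => ?_⟩⟩ hPq)
  · rw [smul_comm]
    exact hn (r • k) ⟨r, hr, rfl⟩ _ (Ideal.pow_mem_pow ha n)
  · have : r * (s * a ^ n) ∈ P := (hk _).2 (by rw [mul_smul, hr]; exact zero_mem _)
    refine (hPp.mem_or_mem this).resolve_right fun h => ?_
    rcases hPp.mem_or_mem h with h | h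
    · exact hs (hPq h)
    · exact haP (hPp.mem_of_pow_mem _ h)

lemma loc_lsmul (p : Ideal R) [p.IsPrime] (y : R) :
    LocalizedModule.map p.primeCompl (LinearMap.lsmul R M y) =
      LinearMap.lsmul (Localization.AtPrime p) (LocalizedModule p.primeCompl M) (algebraMap R _ y) := by
  ext u
  induction u using LocalizedModule.induction_on with
  | h m s =>
    rw [LocalizedModule.map_mk, LinearMap.lsmul_apply, LinearMap.lsmul_apply, algebraMap_smul, LocalizedModule.smul'_mk]

lemma mk_zero_iff (S : Submonoid R) (m : M) (s : S) : LocalizedModule.mk m s = 0 ↔ ∃ w ∈ S, w • m = 0 := by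
  rw [← LocalizedModule.zero_mk 1, LocalizedModule.mk_eq]
  constructor
  · rintro ⟨u, hu⟩
    refine ⟨u, u.2, ?_⟩
    simpa [Submonoid.smul_def] using hu
  · rintro ⟨w, hw, h⟩
    refine ⟨⟨w, hw⟩, ?_⟩
    simpa [Submonoid.smul_def] using h

lemma loc_ass (p : Ideal R) [hpp : p.IsPrime] (h : Nontrivial (extH (IsLocalRing.maximalIdeal (Localization.AtPrime p)) 0
      (LocalizedModule p.primeCompl M))) : IsAss p M := by
  rw [ext_zero_iff] at h
  obtain ⟨u, hu, h⟩ := h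
  induction u using LocalizedModule.induction_on with
  | h m s =>
  have hm : ∀ w ∉ p, w • m ≠ 0 := fun w hw h0 => hu ((mk_zero_iff _ m s).2 ⟨w, hw, h0⟩)
  have h1 : ∀ y ∈ p, ∃ w ∈ p.primeCompl, w • (y • m) = 0 := by
    intro y hy
    refine (mk_zero_iff _ (y • m) s).1 ?_
    rw [← LocalizedModule.smul'_mk, ← algebraMap_smul (Localization.AtPrime p)]
    refine h _ ?_
    rw [← Localization.AtPrime.map_eq_maximalIdeal]
    exact Ideal.mem_map_of_mem _ hy
  obtain ⟨s, hs, n, hn⟩ := unifS (I := ⊤) p.primeCompl (Submodule.map (LinearMap.toSpanSingleton R M m) p)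
      ((IsNoetherian.noetherian p).map _)
      (by
        rintro _ ⟨r, hr, rfl⟩
        obtain ⟨w, hw, h⟩ := h1 r hr
        exact ⟨w, hw, 0, fun a _ => by rw [mul_comm, mul_smul, LinearMap.toSpanSingleton_apply, h, smul_zero]⟩)
  refine ⟨hpp, s • m, fun r => ⟨fun hr => ?_, fun hr => ?_⟩⟩
  · rw [smul_comm]
    have := hn (r • m) ⟨r, hr, rfl⟩ 1 (by rw [Ideal.top_pow]; trivial)
    rwa [mul_one] at this
  · by_contra hrp
    rw [smul_smul] at hr
    exact hm _ (p.primeCompl.mul_mem hrp hs) hr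

lemma partA (d : ℕ) : ∀ (c : ℕ) (M : Type) [AddCommGroup M] [Module R M] [Module.Finite R M]
    (p q : PrimeSpectrum R), ¬ I ≤ p.asIdeal → I ≤ q.asIdeal → p ≤ q →
    Nontrivial (extH (IsLocalRing.maximalIdeal (Localization.AtPrime p.asIdeal)) d
      (LocalizedModule p.asIdeal.primeCompl M)) →
    (∀ i < c, CC q.asIdeal.primeCompl I (locH I i M)) → ∃ P, p ≤ P ∧ Chn (c - d) P q := by
  induction d with
  | zero =>
    intro c M _ _ _ p q hIp hIq hpq hE hCC
    exact ⟨p, le_rfl, A0 c M p q (loc_ass _ hE) hIp hIq hpq hCC⟩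
  | succ d ih =>
    intro c M _ _ _ p q hIp hIq hpq hE hCC
    by_cases hP : ∃ P : PrimeSpectrum R, IsAss P.asIdeal M ∧ p ≤ P ∧ P ≤ q ∧ ¬ I ≤ P.asIdeal
    · obtain ⟨P, hPA, hpP, hPq, hIP⟩ := hP
      exact ⟨P, hpP, (A0 c M P q hPA hIP hIq hPq hCC).mono (by lia)⟩
    classical
    obtain ⟨F, hF⟩ := finite_ass (R := R) M
    obtain ⟨y, hyp, hy⟩ := avoid (F.filter fun P => P ≤ q.asIdeal ∧ ¬ I ≤ P)
      (fun P h => ((hF P).1 (Finset.mem_filter.1 h).1).1) p.asIdeal 0 (by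
        rintro P h ⟨-, hpP⟩
        obtain ⟨h1, h2, h3⟩ := Finset.mem_filter.1 h
        rw [hF] at h1
        exact hP ⟨⟨P, h1.1⟩, h1, hpP, h2, h3⟩)
    simp only [zero_add] at hy
    set g := (LinearMap.lsmul R M y).rangeRestrict with hg
    set K := LinearMap.ker g with hK
    have hKmem : ∀ x : M, x ∈ K ↔ y • x = 0 := by
      intro x
      rw [hK, hg, LinearMap.ker_rangeRestrict, LinearMap.mem_ker]; rfl
    have hyK : ∀ x : K, y • x = 0 := fun x => Subtype.ext ((hKmem x).1 x.2)
    obtain ⟨s, hs, n, hn⟩ := kill_of_ass (M := K) (I := I) q.asIdeal (by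
      intro P hPK hPq
      by_contra hIP
      have hPM : IsAss P M := hPK.of_inj K.subtype K.subtype_injective
      refine hy P (Finset.mem_filter.2 ⟨(hF P).2 hPM, hPq, hIP⟩) ?_
      obtain ⟨-, x, hx⟩ := hPK
      exact (hx y).2 (hyK x))
    have hKC : ∀ i, CC q.asIdeal.primeCompl I (locH I i K) := fun i =>
      ⟨n, fun x a ha => ⟨s, hs, by
        rw [smul_smul]
        exact smul_eq_zero_of i (s * a) (fun u => hn u a ha) x⟩⟩
    have hS1 : SES K.subtype g := SES.of_surj g (LinearMap.surjective_rangeRestrict _)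
    have hS2 := SES.of_submodule (LinearMap.range (LinearMap.lsmul R M y))
    have hW : ∀ i < c, CC q.asIdeal.primeCompl I (locH I i (LinearMap.range (LinearMap.lsmul R M y))) :=
      fun i hi => hS1.cc3 i (hCC i hi) (hKC (i+1))
    obtain ⟨P, h1, h2⟩ := ih (c - 1) (M ⧸ LinearMap.range (LinearMap.lsmul R M y)) p q hIp hIq hpq (by
      refine ext_step (N := LocalizedModule p.asIdeal.primeCompl M) _ (algebraMap R _ y) ?_
        (g := LocalizedModule.map p.asIdeal.primeCompl (LinearMap.range (LinearMap.lsmul R M y)).mkQ) ?_ d hE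
      · rw [← Localization.AtPrime.map_eq_maximalIdeal]
        exact Ideal.mem_map_of_mem _ hyp
      · rw [← loc_lsmul]
        refine ⟨?_, ?_, ?_⟩
        · rw [injective_iff_map_eq_zero]
          intro u hu
          induction u using LocalizedModule.induction_on with
          | h m t =>
          rw [LocalizedModule.map_mk, mk_zero_iff] at hu
          obtain ⟨w, hw, h⟩ := hu
          have hk : w • m ∈ K := by
            rw [hKmem, smul_comm]; exact h
          obtain ⟨a, ha, hap⟩ := SetLike.not_le_iff_exists.1 hIp
          rw [mk_zero_iff]
          refine ⟨s * a ^ n * w, mul_mem (mul_mem (fun h => hs (hpq h)) (pow_mem hap n)) hw, ?_⟩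
          rw [mul_smul]
          exact congrArg Subtype.val (hn ⟨_, hk⟩ _ (Ideal.pow_mem_pow ha n))
        · exact LocalizedModule.map_exact _ _ _ (LinearMap.exact_map_mkQ_range _)
        · exact LocalizedModule.map_surjective _ _ (Submodule.mkQ_surjective _))
      (fun i hi => hS2.cc3 i (hCC i (by lia)) (hW (i+1) (by lia)))
    exact ⟨P, h1, h2.mono (by lia)⟩

end A

end LC

namespace LC

section Artin

variable {A : Type} [CommRing A] {X : Type} [AddCommGroup X] [Module A X]

/-- the auxiliary submodule -/
def QQ (x : A) (k : ℕ) (N : Submodule A X) : Submodule A X :=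
  Submodule.map (LinearMap.lsmul A X (x ^ k)) (N ⊓ LinearMap.ker (LinearMap.lsmul A X (x ^ (k+1))))

lemma mem_QQ (x : A) (k : ℕ) (N : Submodule A X) (u : X) :
    u ∈ QQ x k N ↔ ∃ m ∈ N, x ^ (k+1) • m = 0 ∧ x ^ k • m = u := by
  constructor
  · rintro ⟨m, ⟨h1, h2⟩, h3⟩; exact ⟨m, h1, h2, h3⟩
  · rintro ⟨m, h1, h2, h3⟩; exact ⟨m, ⟨h1, h2⟩, h3⟩

lemma art_lemma (x : A) (hx : ∀ u : X, ∃ n : ℕ, x ^ n • u = 0) (K : Submodule A X) [hK : IsArtinian A K]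
    (hle : ∀ u : X, x • u = 0 → u ∈ K) : IsArtinian A X := by
  rw [← monotone_stabilizes_iff_artinian]
  intro f
  have hf : ∀ n m, n ≤ m → (OrderDual.ofDual (f m) : Submodule A X) ≤ OrderDual.ofDual (f n) :=
    fun n m h => f.monotone h
  set M : ℕ → Submodule A X := fun n => OrderDual.ofDual (f n) with hM
  have hMle : ∀ n m, n ≤ m → M m ≤ M n := hf
  have hQK : ∀ k N, QQ x k N ≤ K := by
    intro k N u hu
    obtain ⟨m, -, h2, rfl⟩ := (mem_QQ _ _ _ _).1 hu
    refine hle _ ?_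
    rw [smul_smul, ← pow_succ']; exact h2
  have hQn : ∀ (k : ℕ) (N N' : Submodule A X), N ≤ N' → QQ x k N ≤ QQ x k N' := fun k N N' h u hu => by
    obtain ⟨m, h1, h2, h3⟩ := (mem_QQ _ _ _ _).1 hu
    exact (mem_QQ _ _ _ _).2 ⟨m, h h1, h2, h3⟩
  have hQk : ∀ (k k' : ℕ) (N : Submodule A X), k ≤ k' → QQ x k' N ≤ QQ x k N := by
    intro k k' N h u hu
    obtain ⟨d, rfl⟩ := Nat.exists_eq_add_of_le h
    obtain ⟨m, h1, h2, h3⟩ := (mem_QQ _ _ _ _).1 hu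
    refine (mem_QQ _ _ _ _).2 ⟨x ^ d • m, N.smul_mem _ h1, ?_, ?_⟩
    · rw [smul_smul, ← pow_add, ← h2]; congr 2; lia
    · rw [smul_smul, ← pow_add]; exact h3
  -- stabilization of chains inside K
  have stab : ∀ g : ℕ → Submodule A X, (∀ n, g n ≤ K) → (∀ n m, n ≤ m → g m ≤ g n) →
      ∃ n, ∀ m, n ≤ m → g n ≤ g m := by
    intro g hgK hg
    obtain ⟨n, hn⟩ := monotone_stabilizes_iff_artinian.2 hK
      ⟨fun n => OrderDual.toDual ((g n).comap K.subtype), fun a b h => Submodule.comap_mono (hg a b h)⟩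
    refine ⟨n, fun m hm u hu => ?_⟩
    have h := hn m hm
    have h' : (g n).comap K.subtype = (g m).comap K.subtype := h
    have : (⟨u, hgK n hu⟩ : K) ∈ (g m).comap K.subtype := h' ▸ hu
    exact this
  obtain ⟨a, ha⟩ := stab (fun n => QQ x n (M n)) (fun n => hQK _ _)
    (fun n m h => (hQk _ _ _ h).trans (hQn _ _ _ (hMle _ _ h)))
  choose b hb using fun k => stab (fun n => QQ x k (M n)) (fun n => hQK _ _) (fun n m h => hQn _ _ _ (hMle _ _ h))
  set n0 := max a ((Finset.range a).sup b) with hn0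
  have key : ∀ n, n0 ≤ n → ∀ k, QQ x k (M n0) ≤ QQ x k (M n) := by
    intro n hn k
    by_cases hk : k < a
    · have h1 : b k ≤ n0 := (Finset.le_sup (f := b) (Finset.mem_range.2 hk)).trans (le_max_right _ _)
      exact (hQn k _ _ (hMle _ _ h1)).trans (hb k n (h1.trans hn))
    · have h1 : a ≤ n0 := le_max_left _ _
      have h2 : QQ x k (M n0) ≤ QQ x a (M a) := (hQk _ _ _ (by lia)).trans (hQn _ _ _ (hMle _ _ h1))
      refine h2.trans ((ha (max k n) (by lia)).trans ((hQk k _ _ (by lia)).trans (hQn _ _ _ (hMle _ _ (by lia)))))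
  refine ⟨n0, fun n hn => ?_⟩
  have hle' : M n0 ≤ M n := by
    have : ∀ k, ∀ z ∈ M n0, x ^ k • z = 0 → z ∈ M n := by
      intro k
      induction k with
      | zero => intro z _ hz; rw [pow_zero, one_smul] at hz; rw [hz]; exact zero_mem _
      | succ k ih =>
        intro z hz h
        obtain ⟨m, h1, h2, h3⟩ := (mem_QQ _ _ _ _).1 (key n hn k ((mem_QQ _ _ _ _).2 ⟨z, hz, h, rfl⟩))
        have := ih (z - m) (sub_mem hz (hMle _ _ hn h1)) (by rw [smul_sub, h3, sub_self])
        simpa using add_mem this h1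
    intro z hz
    obtain ⟨k, hk⟩ := hx z
    exact this k z hz hk
  exact le_antisymm (hMle _ _ hn : M n ≤ M n0) hle' |>.symm

lemma art_irr [IsNoetherianRing A] [IsArtinian A X] (J : Ideal A) (U : Submodule A X)
    (hirr : ∀ V W : Submodule A X, V < U → W < U → V ⊔ W ≠ U) :
    ∃ F : Finset (Ideal A), (∀ P ∈ F, P.IsPrime ∧ ¬ J ≤ P) ∧ ∃ k : ℕ, ∃ U1 U2 : Submodule A X,
      U ≤ U1 ⊔ U2 ∧ (∀ x : A, (∀ P ∈ F, x ∉ P) → ∀ u ∈ U1, ∃ v ∈ U1, x • v = u) ∧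
      ∀ a ∈ J ^ k, ∀ u ∈ U2, a • u = 0 := by
  by_cases hU : U = ⊥
  · subst hU
    refine ⟨∅, by simp, 0, ⊥, ⊥, by simp, ?_, ?_⟩
    · rintro x - u hu; exact ⟨0, zero_mem _, by rw [(Submodule.mem_bot A).1 hu, smul_zero]⟩
    · intro a _ u hu; rw [(Submodule.mem_bot A).1 hu, smul_zero]
  set N := U.annihilator.radical with hN
  have dich : ∀ r : A, r ∉ N → ∀ u ∈ U, ∃ v ∈ U, r • v = u := by
    intro r hr
    obtain ⟨n, hn⟩ := IsArtinian.monotone_stabilizes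
      (⟨fun k => OrderDual.toDual (U.map (LinearMap.lsmul A X (r ^ k))), fun a b h => by
        change U.map _ ≤ U.map _
        rintro _ ⟨u, hu, rfl⟩
        refine ⟨r ^ (b - a) • u, U.smul_mem _ hu, ?_⟩
        simp only [LinearMap.lsmul_apply, smul_smul, ← pow_add]
        congr 2; lia⟩ : ℕ →o (Submodule A X)ᵒᵈ)
    have h1 : U.map (LinearMap.lsmul A X (r ^ (n+1))) = U.map (LinearMap.lsmul A X (r ^ ((n+1) + (n+1)))) :=
      (hn (n+1) (by lia)).symm.trans (hn _ (by lia))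
    set V := U.map (LinearMap.lsmul A X (r ^ (n+1))) with hV
    set W := U ⊓ LinearMap.ker (LinearMap.lsmul A X (r ^ (n+1))) with hW
    have hVU : V ≤ U := by rintro _ ⟨u, hu, rfl⟩; exact U.smul_mem _ hu
    have hWU : W ≤ U := inf_le_left
    have hs : V ⊔ W = U := by
      refine le_antisymm (sup_le hVU hWU) fun u hu => ?_
      have h2 : r ^ (n+1) • u ∈ V := ⟨u, hu, rfl⟩
      rw [h1] at h2
      obtain ⟨v, hv, h3⟩ := h2
      rw [LinearMap.lsmul_apply, pow_add, mul_smul] at h3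
      refine Submodule.mem_sup.2 ⟨r ^ (n+1) • v, ⟨v, hv, rfl⟩, u - r ^ (n+1) • v,
        ⟨sub_mem hu (U.smul_mem _ hv), ?_⟩, by abel⟩
      change r ^ (n+1) • (u - _) = 0
      rw [smul_sub, h3, sub_self]
    rcases hVU.lt_or_eq with h | h
    · rcases hWU.lt_or_eq with h' | h'
      · exact (hirr V W h h' hs).elim
      · refine (hr ⟨n+1, ?_⟩).elim
        rw [Submodule.mem_annihilator]
        intro u hu
        rw [← h'] at hu
        exact hu.2
    · intro u hu
      rw [← h] at hu
      obtain ⟨v, hv, rfl⟩ := hu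
      refine ⟨r ^ n • v, U.smul_mem _ hv, ?_⟩
      rw [smul_smul, ← pow_succ']; rfl
  have hNp : N.IsPrime := by
    constructor
    · intro h
      refine hU ((Submodule.eq_bot_iff _).2 fun u hu => ?_)
      have h1 : (1 : A) ∈ N := h ▸ trivial
      obtain ⟨n, hn⟩ := h1
      rw [one_pow, Submodule.mem_annihilator] at hn
      simpa using hn u hu
    · intro a b hab
      by_contra! h
      obtain ⟨n, hn⟩ := hab
      rw [Submodule.mem_annihilator] at hn
      have hd : ∀ k : ℕ, ∀ u ∈ U, ∃ v ∈ U, (a * b) ^ k • v = u := by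
        intro k
        induction k with
        | zero => intro u hu; exact ⟨u, hu, by simp⟩
        | succ k ih =>
          intro u hu
          obtain ⟨v, hv, rfl⟩ := ih u hu
          obtain ⟨w, hw, rfl⟩ := dich a h.1 v hv
          obtain ⟨z, hz, rfl⟩ := dich b h.2 w hw
          exact ⟨z, hz, by rw [pow_succ, mul_smul, mul_smul]⟩
      refine hU ((Submodule.eq_bot_iff _).2 fun u hu => ?_)
      obtain ⟨v, hv, rfl⟩ := hd n u hu
      exact hn v hv
  by_cases hJ : J ≤ N
  · obtain ⟨k, hk⟩ := Ideal.exists_pow_le_of_le_radical_of_fg hJ (IsNoetherian.noetherian J)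
    refine ⟨∅, by simp, k, ⊥, U, by simp, ?_, fun a ha u hu => Submodule.mem_annihilator.1 (hk ha) u hu⟩
    rintro x - u hu; exact ⟨0, zero_mem _, by rw [(Submodule.mem_bot A).1 hu, smul_zero]⟩
  · refine ⟨{N}, by simpa using ⟨hNp, hJ⟩, 0, U, ⊥, by simp, fun x hx => dich x (hx N (by simp)), ?_⟩
    intro a _ u hu; rw [(Submodule.mem_bot A).1 hu, smul_zero]

lemma art_dec [IsNoetherianRing A] [IsArtinian A X] (J : Ideal A) (U : Submodule A X) :
    ∃ F : Finset (Ideal A), (∀ P ∈ F, P.IsPrime ∧ ¬ J ≤ P) ∧ ∃ k : ℕ, ∃ U1 U2 : Submodule A X,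
      U ≤ U1 ⊔ U2 ∧ (∀ x : A, (∀ P ∈ F, x ∉ P) → ∀ u ∈ U1, ∃ v ∈ U1, x • v = u) ∧
      ∀ a ∈ J ^ k, ∀ u ∈ U2, a • u = 0 := by
  classical
  induction U using WellFoundedLT.induction with
  | ind U ih =>
  by_cases hirr : ∀ V W : Submodule A X, V < U → W < U → V ⊔ W ≠ U
  · exact art_irr J U hirr
  push Not at hirr
  obtain ⟨V, W, hV, hW, rfl⟩ := hirr
  obtain ⟨F, hF, k, U1, U2, h1, h2, h3⟩ := ih V hV
  obtain ⟨F', hF', k', U1', U2', h1', h2', h3'⟩ := ih W hW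
  refine ⟨F ∪ F', ?_, k + k', U1 ⊔ U1', U2 ⊔ U2', ?_, ?_, ?_⟩
  · intro P hP
    rcases Finset.mem_union.1 hP with h | h
    · exact hF P h
    · exact hF' P h
  · rw [sup_sup_sup_comm]; exact sup_le_sup h1 h1'
  · intro x hx u hu
    obtain ⟨y, hy, z, hz, rfl⟩ := Submodule.mem_sup.1 hu
    obtain ⟨y', hy', rfl⟩ := h2 x (fun P hP => hx P (Finset.mem_union_left _ hP)) y hy
    obtain ⟨z', hz', rfl⟩ := h2' x (fun P hP => hx P (Finset.mem_union_right _ hP)) z hz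
    exact ⟨y' + z', Submodule.add_mem_sup hy' hz', smul_add _ _ _⟩
  · intro a ha u hu
    obtain ⟨y, hy, z, hz, rfl⟩ := Submodule.mem_sup.1 hu
    rw [smul_add, h3 a (Ideal.pow_le_pow_right (by lia) ha) y hy,
      h3' a (Ideal.pow_le_pow_right (by lia) ha) z hz, add_zero]

lemma art_div [IsNoetherianRing A] [IsArtinian A X] (J : Ideal A)
    (hJ : J • (⊤ : Submodule A X) = ⊤) : ∃ x ∈ J, ∀ u : X, ∃ v, x • v = u := by
  obtain ⟨F, hF, k, U1, U2, h1, h2, h3⟩ := art_dec J (⊤ : Submodule A X)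
  obtain ⟨x, hxJ, hx⟩ := avoid F (fun P h => (hF P h).1) J 0 (fun P h h' => (hF P h).2 h'.2)
  simp only [zero_add] at hx
  refine ⟨x, hxJ, fun u => ?_⟩
  have hk : J ^ k • (⊤ : Submodule A X) = ⊤ := by
    clear h3
    induction k with
    | zero => simp
    | succ k ih => rw [pow_succ, mul_smul, hJ, ih]
  have hu : u ∈ U1 := by
    have : u ∈ J ^ k • (⊤ : Submodule A X) := by
      rw [hk]; exact Submodule.mem_top
    refine Submodule.smul_induction_on this ?_ (fun a b => add_mem)
    intro r hr n _
    obtain ⟨y, hy, z, hz, rfl⟩ := Submodule.mem_sup.1 (h1 (trivial : n ∈ ⊤))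
    rw [smul_add, h3 r hr z hz, add_zero]
    exact U1.smul_mem _ hy
  obtain ⟨v, -, h⟩ := h2 x hx u hu
  exact ⟨v, h⟩

lemma art_of_max {A M: Type} [CommRing A] [IsLocalRing A] [AddCommGroup M] [Module A M] [Module.Finite A M] (h : ∀ a∈ IsLocalRing.maximalIdeal A, ∀ m:M, a•m=0) : IsArtinian A M := by
  have htor : Module.IsTorsionBySet A M (IsLocalRing.maximalIdeal A) := fun m a => h a a.2 m
  let _ := htor.module
  let _ : Field (A ⧸ IsLocalRing.maximalIdeal A) := Ideal.Quotient.field _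
  have hst := htor.isScalarTower (S := A)
  have : Module.Finite (A ⧸ IsLocalRing.maximalIdeal A) M := Module.Finite.of_restrictScalars_finite A _ _
  have h2 : IsArtinian (A ⧸ IsLocalRing.maximalIdeal A) M := inferInstance
  have : RingHomSurjective (Ideal.Quotient.mk (IsLocalRing.maximalIdeal A)) := ⟨Ideal.Quotient.mk_surjective⟩
  let l : M →ₛₗ[Ideal.Quotient.mk (IsLocalRing.maximalIdeal A)] M :=
    { toFun := id, map_add' := fun _ _ => rfl, map_smul' := fun _ _ => rfl }
  exact (LinearMap.isArtinian_iff_of_bijective l Function.bijective_id).2 h2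

lemma art_of_pow {A : Type} [CommRing A] [IsLocalRing A] [IsNoetherianRing A] (e : ℕ) : ∀ (M : Type) [AddCommGroup M] [Module A M] [Module.Finite A M] (_ : ∀ a∈ IsLocalRing.maximalIdeal A ^ e, ∀ m:M, a•m=0), IsArtinian A M := by
  induction e with
  | zero => 
    intro M _ _ _ h
    refine art_of_max fun a _ m => ?_
    have := h a (by simp) m
    exact this
  | succ e ih =>
    intro M _ _ _ h
    let N : Submodule A M := IsLocalRing.maximalIdeal A • ⊤
    have h1 : IsArtinian A N := by
      refine ih N fun a ha m => Subtype.ext ?_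
      obtain ⟨m, hm⟩ := m
      change a • m = 0
      refine Submodule.smul_induction_on hm ?_ ?_
      · intro r hr n _
        rw [smul_smul]
        exact h _ (by rw [pow_succ]; exact Ideal.mul_mem_mul ha hr) _
      · intro x y h1 h2; rw [smul_add, h1, h2, add_zero]
    have h2 : IsArtinian A (M ⧸ N) := by
      refine art_of_max fun a ha m => ?_
      obtain ⟨m, rfl⟩ := N.mkQ_surjective m
      rw [← map_smul]
      exact (Submodule.Quotient.mk_eq_zero N).2 (Submodule.smul_mem_smul ha trivial)
    exact isArtinian_of_range_eq_ker N.subtype N.mkQ (by simp)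

end Artin

end LC

namespace LC

section TArt

variable {I : Ideal R}

lemma Hm_add {A B : Type} [AddCommGroup A] [AddCommGroup B] [Module R A] [Module R B] (i : ℕ)
    (f g : A →ₗ[R] B) : Hm I i (f + g) = Hm I i f + Hm I i g := by
  ext x
  obtain ⟨n, e, rfl⟩ := iota_surj I x
  rw [LinearMap.add_apply, Hm_iota, Hm_iota, Hm_iota, ← map_add, ← Abelian.Ext.comp_add,
    ← Abelian.Ext.mk₀_add]
  rfl

lemma Hm_sum {A B ι : Type} [AddCommGroup A] [AddCommGroup B] [Module R A] [Module R B] (i : ℕ)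
    (s : Finset ι) (f : ι → A →ₗ[R] B) : Hm I i (∑ j ∈ s, f j) = ∑ j ∈ s, Hm I i (f j) := by
  classical
  induction s using Finset.induction_on with
  | empty => simp [Hm_zero]
  | insert a s ha ih => rw [Finset.sum_insert ha, Finset.sum_insert ha, Hm_add, ih]

variable [IsNoetherianRing R]

lemma T_art {p q : Ideal R} [hqp : q.IsPrime] (hq : q ∈ (I ⊔ p).minimalPrimes) (i : ℕ) :
    ∀ (N : Type) [AddCommGroup N] [Module R N] [Module.Finite R N], p ≤ Module.annihilator R N →
    IsArtinian (Localization.AtPrime q) (LocalizedModule q.primeCompl (locH I i N)) := by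
  induction i with
  | zero =>
    intro N _ _ _ hN
    obtain ⟨n, hn⟩ := Gam_unif (N := N) (I := I)
    let G := Gam N I
    have hqn : q ∈ (I ^ (n+1) ⊔ p).minimalPrimes := by
      refine ⟨⟨hqp, sup_le ?_ (le_sup_right.trans hq.1.2)⟩, fun Q hQ hQq => hq.2 ⟨hQ.1, sup_le ?_ (le_sup_right.trans hQ.2)⟩ hQq⟩
      · exact (Ideal.pow_le_self (by lia)).trans (le_sup_left.trans hq.1.2)
      · exact (hQ.1.pow_le_iff (n := n + 1) (by simp)).1 (le_sup_left.trans hQ.2)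
    obtain ⟨t, ht, e, he⟩ := loc_rad hqn q le_rfl
    have hker : ∀ a ∈ I ^ (n+1) ⊔ p, ∀ u : G, a • u = 0 := by
      intro a ha u
      obtain ⟨b, hb, c, hc, rfl⟩ := Submodule.mem_sup.1 ha
      rw [add_smul]
      have h1 : b • u = 0 := hn b (Ideal.pow_le_pow_right (by lia) hb) u
      have h2 : c • u = 0 := Subtype.ext (Module.mem_annihilator.1 (hN hc) u.1)
      rw [h1, h2, add_zero]
    have hG : IsArtinian (Localization.AtPrime q) (LocalizedModule q.primeCompl G) := by
      refine art_of_pow e _ fun a ha m => ?_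
      have hmap : IsLocalRing.maximalIdeal (Localization.AtPrime q) ^ e =
          (q ^ e).map (algebraMap R (Localization.AtPrime q)) := by
        rw [Ideal.map_pow, Localization.AtPrime.map_eq_maximalIdeal]
      rw [hmap] at ha
      refine Submodule.span_induction ?_ ?_ ?_ ?_ ha
      · rintro _ ⟨r, hr, rfl⟩
        induction m using LocalizedModule.induction_on with
        | h m s =>
        rw [algebraMap_smul, LocalizedModule.smul'_mk, mk_zero_iff]
        refine ⟨t, ht, ?_⟩
        rw [smul_smul]
        exact hker _ (he r hr) m
      · simp
      · intro x y _ _ h1 h2; rw [add_smul, h1, h2, add_zero]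
      · intro x y _ h; rw [smul_assoc, h, smul_zero]
    let γ : locH I 0 N →ₗ[R] G := LinearMap.codRestrict G (gam I N) (fun x => by
      obtain ⟨n, hn⟩ := torsion I x
      rw [mem_Gam]
      refine ⟨n, fun a ha => ?_⟩
      rw [← map_smul, hn a ha, map_zero])
    refine isArtinian_of_injective (LocalizedModule.map q.primeCompl γ) (LocalizedModule.map_injective _ _ ?_)
    intro a b h
    exact gam_inj I N (congrArg Subtype.val h)
  | succ i ih =>
    have key : ∀ (N : Type) [AddCommGroup N] [Module R N] [Module.Finite R N], p ≤ Module.annihilator R N →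
        TF N I → IsArtinian (Localization.AtPrime q) (LocalizedModule q.primeCompl (locH I (i+1) N)) := by
      intro N _ _ _ hN hTF
      obtain ⟨x, hxI, hx⟩ := hTF.exists_regular
      have hS := SES.of_regular x hx
      have hC := ih (N ⧸ LinearMap.range (LinearMap.lsmul R N x))
        (hN.trans (LinearMap.annihilator_le_of_surjective _ (Submodule.mkQ_surjective _)))
      let φ := LocalizedModule.map q.primeCompl (hS.delta I i)
      have : IsArtinian (Localization.AtPrime q) (LinearMap.range φ) :=
        isArtinian_of_surjective _ φ.rangeRestrict (LinearMap.surjective_rangeRestrict _)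
      refine art_lemma (algebraMap R _ x) ?_ (LinearMap.range φ) ?_
      · intro u
        induction u using LocalizedModule.induction_on with
        | h h s =>
        obtain ⟨n, hn⟩ := torsion I h
        refine ⟨n, ?_⟩
        rw [← map_pow, algebraMap_smul, LocalizedModule.smul'_mk]
        rw [hn _ (Ideal.pow_mem_pow hxI n), LocalizedModule.zero_mk]
      · intro u hu
        induction u using LocalizedModule.induction_on with
        | h h s =>
        rw [algebraMap_smul, LocalizedModule.smul'_mk, mk_zero_iff] at hu
        obtain ⟨w, hw, hu⟩ := hu
        rw [smul_comm, ← Hm_lsmul] at hu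
        obtain ⟨k, hk⟩ := hS.ex1 I i _ hu
        refine ⟨LocalizedModule.mk k (⟨w, hw⟩ * s), ?_⟩
        rw [LocalizedModule.map_mk, hk]
        exact LocalizedModule.mk_cancel_common_left ⟨w, hw⟩ s h
    intro N _ _ _ hN
    have h1 := key (N ⧸ Gam N I)
      (hN.trans (LinearMap.annihilator_le_of_surjective _ (Submodule.mkQ_surjective _))) quot_TF
    exact isArtinian_of_injective (LocalizedModule.map q.primeCompl (Hm I (i+1) (Gam N I).mkQ))
      (LocalizedModule.map_injective _ _ (quot_bij (i+1) (by lia)).1)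

lemma nul_over {S : Submonoid R} {p : Ideal R} [p.IsPrime] (c : ℕ)
    (h : ∀ i, c ≤ i → Nul S (locH I i (R ⧸ p))) (i : ℕ) (hi : c ≤ i)
    (N : Type) [AddCommGroup N] [Module R N] [Module.Finite R N] (hN : p ≤ Module.annihilator R N) :
    Nul S (locH I i N) :=
  filt p i (fun P hP hpP => B1 (R ⧸ p) c h i hi P hP (by rw [Ideal.annihilator_quotient]; exact hpP)) N hN

lemma HI {S : Submonoid R} {p : Ideal R} [p.IsPrime] (m : ℕ) (hm : 0 < m)
    (h : ∀ i, m + 1 ≤ i → Nul S (locH I i (R ⧸ p))) (z : locH I m (R ⧸ p)) :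
    ∃ s ∈ S, s • z ∈ I • (⊤ : Submodule R (locH I m (R ⧸ p))) := by
  classical
  obtain ⟨G, hG⟩ := (IsNoetherian.noetherian I : I.FG)
  let V := (G → R ⧸ p)
  let φ : V →ₗ[R] (R ⧸ p) := ∑ g : G, g.1 • LinearMap.proj g
  have hφ : ∀ v, φ v = ∑ g : G, g.1 • v g := fun v => by simp [φ]; rfl
  let J := LinearMap.range φ
  have hIJ : ∀ a ∈ I, ∀ r : R ⧸ p, a • r ∈ J := by
    intro a ha r
    rw [← hG] at ha
    refine Submodule.span_induction ?_ ?_ ?_ ?_ ha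
    · intro g hg
      refine ⟨Pi.single ⟨g, hg⟩ r, ?_⟩
      rw [hφ, Finset.sum_eq_single ⟨g, hg⟩]
      · simp
      · intro b _ hb; rw [Pi.single_eq_of_ne hb, smul_zero]
      · simp
    · rw [zero_smul]; exact zero_mem _
    · intro x y _ _ h1 h2; rw [add_smul]; exact add_mem h1 h2
    · intro x y _ h; rw [smul_assoc]; exact J.smul_mem _ h
  have hsub : Subsingleton (locH I m ((R ⧸ p) ⧸ J)) := by
    refine L2 I _ 1 ?_ m hm
    intro a ha u
    rw [pow_one] at ha
    obtain ⟨u, rfl⟩ := J.mkQ_surjective u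
    rw [← map_smul]
    exact (Submodule.Quotient.mk_eq_zero J).2 (hIJ a ha u)
  obtain ⟨y, rfl⟩ := (SES.of_submodule J).ex2 I m z (Subsingleton.elim _ _)
  have hS := SES.of_surj φ.rangeRestrict (LinearMap.surjective_rangeRestrict _)
  have hV : p ≤ Module.annihilator R V := fun a ha => Module.mem_annihilator.2 fun v => funext fun g => by
    have : p ≤ Module.annihilator R (R ⧸ p) := by rw [Ideal.annihilator_quotient]
    exact Module.mem_annihilator.1 (this ha) (v g)
  have hK := nul_over (m+1) h (m+1) le_rfl (LinearMap.ker φ.rangeRestrict)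
    (hV.trans (LinearMap.annihilator_le_of_injective _ (Submodule.subtype_injective _)))
  obtain ⟨s, hs, h0⟩ := hK (hS.delta I m y)
  rw [← map_smul] at h0
  obtain ⟨v, hv⟩ := hS.ex3 I m _ h0
  refine ⟨s, hs, ?_⟩
  rw [← map_smul, ← hv, Hm_comp_apply]
  have : J.subtype ∘ₗ φ.rangeRestrict = φ := rfl
  rw [this, show φ = ∑ g : G, g.1 • LinearMap.proj g from rfl, Hm_sum, LinearMap.sum_apply]
  refine Submodule.sum_mem _ fun g _ => ?_
  rw [Hm_smul, LinearMap.smul_apply]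
  exact Submodule.smul_mem_smul (hG ▸ Submodule.subset_span g.2) trivial

lemma exists_div {p q : Ideal R} [p.IsPrime] [hqp : q.IsPrime] (hq : q ∈ (I ⊔ p).minimalPrimes)
    (m : ℕ) (hm : 0 < m)
    (h : ∀ i, m + 1 ≤ i → Nul q.primeCompl (locH I i (R ⧸ p))) :
    ∃ x ∈ I, ∀ z : locH I m (R ⧸ p), ∃ s ∈ q.primeCompl, ∃ w, s • z = x • w := by
  have hart := T_art hq m (R ⧸ p) (by rw [Ideal.annihilator_quotient])
  have hsm : ∀ (z : locH I m (R ⧸ p)) (t : q.primeCompl), LocalizedModule.mk z t =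
      Localization.mk 1 t • LocalizedModule.mkLinearMap q.primeCompl _ z := by
    intro z t
    rw [LocalizedModule.mkLinearMap_apply, LocalizedModule.mk_smul_mk, one_smul, mul_one]
  obtain ⟨x', hx', hdiv⟩ := art_div (A := Localization.AtPrime q) (X := LocalizedModule q.primeCompl (locH I m (R ⧸ p)))
    (I.map (algebraMap R (Localization.AtPrime q))) (by
      refine eq_top_iff.2 fun u _ => ?_
      induction u using LocalizedModule.induction_on with
      | h z t =>
      obtain ⟨s, hs, hz⟩ := HI m hm h z
      rw [← LocalizedModule.mk_cancel_common_left ⟨s, hs⟩ t z, hsm]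
      refine Submodule.smul_mem _ _ ?_
      refine Submodule.smul_induction_on (p := fun w => LocalizedModule.mkLinearMap q.primeCompl _ w ∈
        I.map (algebraMap R (Localization.AtPrime q)) •
        (⊤ : Submodule (Localization.AtPrime q) (LocalizedModule q.primeCompl (locH I m (R ⧸ p))))) hz ?_ ?_
      · intro a ha n _
        rw [map_smul, ← algebraMap_smul (Localization.AtPrime q)]
        exact Submodule.smul_mem_smul (Ideal.mem_map_of_mem _ ha) trivial
      · intro a b ha hb
        rw [map_add]; exact add_mem ha hb)
  obtain ⟨⟨a, s⟩, has⟩ := (IsLocalization.mem_map_algebraMap_iff q.primeCompl (Localization.AtPrime q)).1 hx'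
  refine ⟨a.1, a.2, fun z => ?_⟩
  obtain ⟨v, hv⟩ := hdiv (LocalizedModule.mk z 1)
  have h1 : LocalizedModule.mk ((s : R) • z) 1 = a.1 • v := by
    rw [← LocalizedModule.smul'_mk, ← hv, ← algebraMap_smul (Localization.AtPrime q) (s : R),
      ← algebraMap_smul (Localization.AtPrime q) (a : R), smul_smul, mul_comm, has]
  induction v using LocalizedModule.induction_on with
  | h w t =>
  rw [LocalizedModule.smul'_mk, LocalizedModule.mk_eq] at h1
  obtain ⟨u, hu⟩ := h1
  refine ⟨u * t * s, mul_mem (mul_mem u.2 t.2) s.2, (u : R) • w, ?_⟩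
  simp only [Submonoid.smul_def, one_smul] at hu
  rw [mul_smul, mul_smul, hu, smul_comm]

lemma B2 (n : ℕ) : ∀ (p q : PrimeSpectrum R), q.asIdeal ∈ (I ⊔ p.asIdeal).minimalPrimes →
    (∀ i, n ≤ i → Nul q.asIdeal.primeCompl (locH I i (R ⧸ p.asIdeal))) →
    ∀ l : LTSeries (PrimeSpectrum R), p ≤ l.head → l.last = q → l.length < n := by
  induction n with
  | zero =>
    intro p q hq h l _ _
    exfalso
    have h1 := B1 (R ⧸ p.asIdeal) 0 h 0 le_rfl q.asIdeal q.2
      (by rw [Ideal.annihilator_quotient]; exact le_sup_right.trans hq.1.2)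
    have hIq : I ≤ q.asIdeal := le_sup_left.trans hq.1.2
    obtain ⟨x, hx⟩ := gam_range I (R ⧸ q.asIdeal) (Ideal.Quotient.mk _ 1) 1 (by
      intro a ha
      rw [pow_one] at ha
      have : q.asIdeal ≤ Module.annihilator R (R ⧸ q.asIdeal) := by rw [Ideal.annihilator_quotient]
      exact Module.mem_annihilator.1 (this (hIq ha)) _)
    obtain ⟨s, hs, h2⟩ := h1 x
    have h3 := congrArg (gam I _) h2
    rw [map_smul, hx, map_zero] at h3
    refine hs ?_
    have h4 : Ideal.Quotient.mk q.asIdeal (s * 1) = 0 := h3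
    rwa [mul_one, Ideal.Quotient.eq_zero_iff_mem] at h4
  | succ m ih =>
    intro p q hq h l hl hlast
    by_cases hm : m = 0
    · subst hm
      by_cases hIp : I ≤ p.asIdeal
      · have hqp : q ≤ p := hq.2 ⟨p.2, sup_le hIp le_rfl⟩ (le_sup_right.trans hq.1.2)
        by_contra hlen
        have hlt : l.head < l.last := l.strictMono (show (0 : Fin _) < Fin.last _ from by
          rw [Fin.lt_def]; simp; lia)
        exact absurd (hlt.trans_le (hlast.le.trans (hqp.trans hl))) (lt_irrefl _)
      · refine (ih p q hq (fun i _ => ?_) l hl hlast).trans (by lia)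
        by_cases hi : i = 0
        · subst hi
          have hTF : TF (R ⧸ p.asIdeal) I := by
            obtain ⟨a, ha, hap⟩ := SetLike.not_le_iff_exists.1 hIp
            intro y hy
            obtain ⟨r, rfl⟩ := Ideal.Quotient.mk_surjective y
            have h1 : Ideal.Quotient.mk p.asIdeal (a * r) = 0 := hy a ha
            rw [Ideal.Quotient.eq_zero_iff_mem] at h1 ⊢
            exact (p.2.mem_or_mem h1).resolve_left hap
          have := hTF.H0
          exact Nul.of_subsingleton
        · exact h i (by lia)
    · obtain ⟨x, hxI, hx⟩ := exists_div hq m (by lia) h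
      by_cases hlen : l.length = 0
      · lia
      have hxq : x ∈ l.last.asIdeal := by rw [hlast]; exact hq.1.2 (Ideal.mem_sup_left hxI)
      obtain ⟨l', hx1, h1, h2, h3⟩ := PrimeSpectrum.exist_ltSeries_mem_one_of_mem_last l hxq
      have hlen' : l'.length ≠ 0 := by lia
      set P := l'.toFun 1 with hP
      have hpP : p ≤ P := by
        refine hl.trans (h2.le.trans ?_)
        exact l'.monotone (Fin.zero_le _)
      have hhead : (l'.tail hlen').head = P := RelSeries.head_tail l' hlen'
      have hlast' : (l'.tail hlen').last = q := by
        rw [RelSeries.last_tail, ← h3, hlast]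
      have := ih P q ?_ ?_ (l'.tail hlen') hhead.ge hlast'
      · have e : (l'.tail hlen').length = l'.length - 1 := rfl
        lia
      · have hPq : P ≤ q := by
          rw [← hhead, ← hlast']
          exact LTSeries.head_le_last _
        exact ⟨⟨q.2, sup_le (le_sup_left.trans hq.1.2) hPq⟩, fun Q hQ hQq =>
          hq.2 ⟨hQ.1, (sup_le_sup_left hpP _).trans hQ.2⟩ hQq⟩
      · intro i hi
        let J := LinearMap.range (LinearMap.lsmul R (R ⧸ p.asIdeal) x)
        refine B1 ((R ⧸ p.asIdeal) ⧸ J) m ?_ i hi P.asIdeal P.2 ?_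
        · intro i hi z
          have hann : p.asIdeal ≤ Module.annihilator R (R ⧸ p.asIdeal) := by rw [Ideal.annihilator_quotient]
          by_cases hi' : m + 1 ≤ i
          · exact nul_over (m+1) h i hi' _ (hann.trans (LinearMap.annihilator_le_of_surjective _ J.mkQ_surjective)) z
          obtain rfl : i = m := by lia
          have hS := SES.of_submodule J
          have hK := nul_over (i+1) h (i+1) le_rfl J
            (hann.trans (LinearMap.annihilator_le_of_injective _ J.subtype_injective))
          obtain ⟨s, hs, h0⟩ := hK (hS.delta I i z)
          rw [← map_smul] at h0
          obtain ⟨v, hv⟩ := hS.ex3 I i _ h0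
          obtain ⟨t, ht, w, hw⟩ := hx v
          refine ⟨t * s, mul_mem ht hs, ?_⟩
          rw [mul_smul, ← hv, ← map_smul, hw, map_smul]
          refine smul_eq_zero_of i x (fun u => ?_) _
          obtain ⟨u, rfl⟩ := J.mkQ_surjective u
          rw [← map_smul]
          exact (Submodule.Quotient.mk_eq_zero J).2 ⟨u, rfl⟩
        · intro r hr
          have h4 := Module.mem_annihilator.1 hr (J.mkQ (Ideal.Quotient.mk _ 1))
          rw [← map_smul] at h4
          obtain ⟨u, hu⟩ := (Submodule.Quotient.mk_eq_zero J).1 h4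
          obtain ⟨u, rfl⟩ := Ideal.Quotient.mk_surjective u
          have h5 : Ideal.Quotient.mk p.asIdeal (x * u) = Ideal.Quotient.mk p.asIdeal (r * 1) := hu
          rw [Ideal.Quotient.eq, mul_one] at h5
          have h6 := hpP h5
          have h7 : x * u ∈ P.asIdeal := P.asIdeal.mul_mem_right _ hx1
          simpa using P.asIdeal.sub_mem h7 h6

end TArt

end LC

namespace LC

section Final

variable {I : Ideal R}

lemma height_quot (p : PrimeSpectrum R) (q' : PrimeSpectrum (R ⧸ p.asIdeal)) (n : ℕ)
    (l : LTSeries (PrimeSpectrum R)) (hl : p ≤ l.head)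
    (hlast : l.last = PrimeSpectrum.comap (Ideal.Quotient.mk p.asIdeal) q') (hn : n ≤ l.length) :
    (n : ℕ∞) ≤ Order.height q' := by
  let e := p.asIdeal.primeSpectrumQuotientOrderIsoZeroLocus
  have hmem : ∀ i, l i ∈ PrimeSpectrum.zeroLocus (p.asIdeal : Set R) := fun i =>
    hl.trans (l.monotone (Fin.zero_le i))
  let l' : LTSeries (PrimeSpectrum (R ⧸ p.asIdeal)) :=
    ⟨l.length, fun i => e.symm ⟨l i, hmem i⟩, fun i => e.symm.strictMono (l.step i)⟩
  have hlast' : l'.last = q' := by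
    have : e q' = ⟨l.last, hmem _⟩ := Subtype.ext hlast.symm
    exact (e.symm_apply_eq).2 this.symm
  have := Order.length_le_height_last (p := l')
  rw [hlast'] at this
  exact le_trans (by exact_mod_cast hn) this

lemma height_quot_le (p : PrimeSpectrum R) (q' : PrimeSpectrum (R ⧸ p.asIdeal)) (n : ℕ)
    (h : ∀ l : LTSeries (PrimeSpectrum R), p ≤ l.head →
      l.last = PrimeSpectrum.comap (Ideal.Quotient.mk p.asIdeal) q' → l.length ≤ n) :
    Order.height q' ≤ n := by
  refine Order.height_le fun l hl => ?_
  let e := p.asIdeal.primeSpectrumQuotientOrderIsoZeroLocus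
  have hs : StrictMono (fun x => (e x : PrimeSpectrum R)) := fun x y hxy => e.strictMono hxy
  have := h (l.map _ hs) ((e l.head).2) (by rw [LTSeries.last_map, hl]; rfl)
  exact_mod_cast this

variable [IsNoetherianRing R]

lemma exists_ass_not (M : Type) [AddCommGroup M] [Module R M] [Module.Finite R M] (c : ℕ)
    (hc : 0 < c) (hM : Nontrivial (locH I c M)) : ∃ p, IsAss p M ∧ ¬ I ≤ p := by
  by_contra! hcon
  obtain ⟨x, hx⟩ := exists_ne (0 : locH I c M)
  obtain ⟨p, hp, hpx⟩ := exists_isAss (R := R) x hx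
  have := hp.1
  obtain ⟨s, hs, n, hn⟩ := kill_of_ass (I := I) (M := M) p (fun P hP _ => hcon P hP)
  refine hs (hpx s ?_)
  have hsub : Subsingleton (locH I c (LinearMap.range (LinearMap.lsmul R M s))) := by
    refine L2 I _ n ?_ c hc
    rintro a ha ⟨_, y, rfl⟩
    refine Subtype.ext ?_
    have := hn y a ha
    rw [mul_comm, mul_smul] at this
    exact this
  have h1 : (LinearMap.range (LinearMap.lsmul R M s)).subtype ∘ₗ
    (LinearMap.lsmul R M s).rangeRestrict = LinearMap.lsmul R M s := rfl
  rw [← Hm_lsmul, ← h1, ← Hm_comp_apply, Subsingleton.elim (Hm I c _ x) 0, map_zero]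

lemma cc_of_finDim (M : Type) [AddCommGroup M] [Module R M] (c : ℕ) (hf : IsFinDim I M c)
    (S : Submonoid R) (i : ℕ) (hi : i < c) : CC S I (locH I i M) := by
  have := hf.1 i hi
  obtain ⟨n, hn⟩ := unif (N := locH I i M) (I := I) (fun y => torsion I y)
  refine ⟨n, fun x a ha => (mem_kid _ _ _).2 ⟨1, S.one_mem, ?_⟩⟩
  rw [hn a ha x, smul_zero]

lemma main_chain (hjac : I ≤ (⊥ : Ideal R).jacobson) (M : Type) [AddCommGroup M] [Module R M]
    [Module.Finite R M] (c : ℕ) (hc : IsCd I M c) (hf : IsFinDim I M c)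
    (p : PrimeSpectrum R) (hp : IsAss p.asIdeal M) (hIp : ¬ I ≤ p.asIdeal) :
    IsCd I (R ⧸ p.asIdeal) c ∧ ∃ q : PrimeSpectrum R, I ≤ q.asIdeal ∧ p ≤ q ∧
      ∀ l : LTSeries (PrimeSpectrum R), p ≤ l.head → l.last = q → l.length ≤ c := by
  obtain ⟨m, hm, hpm⟩ := Ideal.exists_le_maximal p.asIdeal p.2.ne_top
  have hIm : I ≤ m := hjac.trans (sInf_le ⟨bot_le, hm⟩)
  have := hm.isPrime
  obtain ⟨q, hq, hqm⟩ := Ideal.exists_minimalPrimes_le (sup_le hIm hpm)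
  let Q : PrimeSpectrum R := ⟨q, hq.1.1⟩
  have hIQ : I ≤ Q.asIdeal := le_sup_left.trans hq.1.2
  have hpQ : p ≤ Q := le_sup_right.trans hq.1.2
  have hann : Module.annihilator R M ≤ p.asIdeal := by
    obtain ⟨_, x, hx⟩ := hp
    intro r hr
    exact (hx r).2 (Module.mem_annihilator.1 hr x)
  have hvan : ∀ i, c + 1 ≤ i → Subsingleton (locH I i (R ⧸ p.asIdeal)) := by
    intro i hi
    exact nul_bot_iff.1 (B1 M (c+1) (fun i hi => nul_bot_iff.2 (hc.2 i hi)) i hi p.asIdeal p.2 hann)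
  obtain ⟨l, hl1, hl2, hl3⟩ := A0 c M p Q hp hIp hIQ hpQ (fun i hi => cc_of_finDim M c hf _ i hi)
  refine ⟨⟨?_, fun i hi => hvan i hi⟩, Q, hIQ, hpQ, fun l h1 h2 => ?_⟩
  · by_contra hn
    rw [not_nontrivial_iff_subsingleton] at hn
    have := B2 (I := I) c p Q hq (fun i hi => by
      have : Subsingleton (locH I i (R ⧸ p.asIdeal)) := by
        rcases hi.eq_or_lt with rfl | hi
        · exact hn
        · exact hvan i hi
      exact Nul.of_subsingleton) l hl1.ge hl2
    lia
  · have := B2 (I := I) (c+1) p Q hq (fun i hi => by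
      have := hvan i hi
      exact Nul.of_subsingleton) l h1 h2
    lia

lemma le_lambda (M : Type) [AddCommGroup M] [Module R M]
    [Module.Finite R M] (c : ℕ) (hf : IsFinDim I M c) : (c : ℕ∞) ≤ lambdaNE I M := by
  refine le_sInf ?_
  rintro _ ⟨p, hIp, rfl⟩
  have key : ∀ a ∈ {d : ℕ∞ | ∃ k : ℕ, d = (k : ℕ∞) ∧
      Nontrivial (extH (IsLocalRing.maximalIdeal (Localization.AtPrime p.asIdeal)) k
        (LocalizedModule p.asIdeal.primeCompl M))},
      ∀ b ∈ {h : ℕ∞ | ∃ q : PrimeSpectrum (R ⧸ p.asIdeal),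
        Ideal.map (Ideal.Quotient.mk p.asIdeal) I ≤ q.asIdeal ∧ h = Order.height q},
      (c : ℕ∞) ≤ a + b := by
    rintro _ ⟨k, rfl, hk⟩ _ ⟨q, hq, rfl⟩
    have hpq : p ≤ PrimeSpectrum.comap (Ideal.Quotient.mk p.asIdeal) q :=
      (p.asIdeal.primeSpectrumQuotientOrderIsoZeroLocus q).2
    obtain ⟨P, hP, l, h1, h2, h3⟩ := partA (I := I) k c M p (PrimeSpectrum.comap (Ideal.Quotient.mk p.asIdeal) q)
      hIp (Ideal.map_le_iff_le_comap.1 hq) hpq hk (fun i hi => cc_of_finDim M c hf _ i hi)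
    have h4 := height_quot p q (c - k) l (h1 ▸ hP) h2 h3
    calc (c : ℕ∞) ≤ ((k + (c - k) : ℕ) : ℕ∞) := by exact_mod_cast (by lia)
      _ = (k : ℕ∞) + ((c - k : ℕ) : ℕ∞) := by push_cast; rfl
      _ ≤ _ := by gcongr
  unfold depthE idealHeight
  rcases Set.eq_empty_or_nonempty {d : ℕ∞ | ∃ k : ℕ, d = (k : ℕ∞) ∧
      Nontrivial (extH (IsLocalRing.maximalIdeal (Localization.AtPrime p.asIdeal)) k
        (LocalizedModule p.asIdeal.primeCompl M))} with h | h
  · rw [h, sInf_empty, top_add]; exact le_top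
  rcases Set.eq_empty_or_nonempty {h : ℕ∞ | ∃ q : PrimeSpectrum (R ⧸ p.asIdeal),
        Ideal.map (Ideal.Quotient.mk p.asIdeal) I ≤ q.asIdeal ∧ h = Order.height q} with h' | h'
  · rw [h', sInf_empty, add_top]; exact le_top
  exact key _ (csInf_mem h) _ (csInf_mem h')

lemma main_thm (I : Ideal R) (hjac : I ≤ (⊥ : Ideal R).jacobson)
    (M : Type) [AddCommGroup M] [Module R M] [Module.Finite R M]
    (hgcm : IsRelGCM I M) (c : ℕ) (hc : IsCd I M c) (hpos : 0 < c) :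
    finDimNE I M = lambdaNE I M ∧
      ∀ p : Ideal R, IsAssociatedPrime p M → ¬ I ≤ p → IsCd I (R ⧸ p) c := by
  have hf : IsFinDim I M c := by
    rcases hgcm with h | ⟨c', h1, h2⟩
    · exact absurd hc.1 (not_nontrivial_iff_subsingleton.2 (h c hpos))
    · obtain rfl : c = c' := by
        rcases lt_trichotomy c c' with h | h | h
        · exact absurd h1.1 (not_nontrivial_iff_subsingleton.2 (hc.2 _ h))
        · exact h
        · exact absurd hc.1 (not_nontrivial_iff_subsingleton.2 (h1.2 _ h))
      exact h2
  constructor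
  · have hfd : finDimNE I M = c := by
      refine le_antisymm (sInf_le ⟨c, rfl, hf.2⟩) (le_sInf ?_)
      rintro _ ⟨k, rfl, hk⟩
      by_contra hlt
      exact hk (hf.1 k (by exact_mod_cast not_le.1 hlt))
    rw [hfd]
    refine le_antisymm (le_lambda M c hf) ?_
    obtain ⟨p, hp, hIp⟩ := exists_ass_not M c hpos hc.1
    obtain ⟨P, rfl⟩ : ∃ P : PrimeSpectrum R, P.asIdeal = p := ⟨⟨p, hp.1⟩, rfl⟩
    obtain ⟨_, q, hIq, hpq, hl⟩ := main_chain hjac M c hc hf P hp hIp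
    have h0 : lambdaNE I M ≤ depthE (Localization.AtPrime P.asIdeal)
        (LocalizedModule P.asIdeal.primeCompl M) +
        idealHeight (Ideal.map (Ideal.Quotient.mk P.asIdeal) I) := sInf_le ⟨P, hIp, rfl⟩
    refine h0.trans ?_
    have hd : depthE (Localization.AtPrime P.asIdeal) (LocalizedModule P.asIdeal.primeCompl M) ≤ 0 :=
      sInf_le ⟨0, by simp, loc_ass_zero P.asIdeal hp⟩
    let e := P.asIdeal.primeSpectrumQuotientOrderIsoZeroLocus
    let q' := e.symm ⟨q, hpq⟩
    have hq' : PrimeSpectrum.comap (Ideal.Quotient.mk P.asIdeal) q' = q :=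
      congrArg Subtype.val (e.apply_symm_apply ⟨q, hpq⟩)
    have hh : idealHeight (Ideal.map (Ideal.Quotient.mk P.asIdeal) I) ≤ c := by
      refine le_trans (b := Order.height q') (sInf_le ⟨q', ?_, rfl⟩) (height_quot_le P q' c fun l h1 h2 => hl l h1 (h2.trans hq'))
      rw [Ideal.map_le_iff_le_comap]
      exact hIq.trans (congrArg PrimeSpectrum.asIdeal hq').ge
    calc _ ≤ (0 : ℕ∞) + c := add_le_add hd hh
      _ = c := zero_add _
  · intro p hp hIp
    exact (main_chain hjac M c hc hf ⟨p, hp.1⟩ ((isAss_iff M p).2 hp) hIp).1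

end Final

end LC

/-- **Lemma 3.2.** Suppose `I` is contained in the Jacobson radical of `R` and `M` is an
`I`-relative generalized Cohen-Macaulay module with `c := cd(I,M) > 0`. Then
`f_I(M) = λ_I(M)`, and `cd(I, R/p) = c` for every associated prime `p` of `M` outside
`V(I)`. -/
theorem lemma_3_2 [IsNoetherianRing R] (I : Ideal R) (hjac : I ≤ (⊥ : Ideal R).jacobson)
    (M : Type) [AddCommGroup M] [Module R M] [Module.Finite R M]
    (hgcm : IsRelGCM I M) (c : ℕ) (hc : IsCd I M c) (hpos : 0 < c) :
    finDimNE I M = lambdaNE I M ∧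
      ∀ p : Ideal R, IsAssociatedPrime p M → ¬ I ≤ p → IsCd I (R ⧸ p) c := by
  exact LC.main_thm I hjac M hgcm c hc hpos
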